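/- arXiv:2403.03724 — 8 statements merged into one kernel-verified Lean document; each statement's English description precedes it below -/
import Mathlib

section
/- There exists a bijection φ: V → {1, …, n} with linear arrangement cost at most X if and only if there exists a binary tree B on the vertex set V ∪ H with cost(B) ≤ C. -/
/-!
The correspondence is between arrangements `φ` and caterpillars: the path `h_1, …, h_{n+2}` with
the vertex at position `p` hanging off `h_{p+1}`. The cost of a network splits into spine demands
(weight `d₂`), anchor demands between `V` and `h_2`, `h_{n+1}` (weight `d₁`) and edges of `G`
(weight `1`), see `cost_eq`. In a caterpillar the spine contributes `(n+1) d₂`, each `v` is at total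
distance `n + 1` from the two anchors, and an edge `{u, v}` has length `|φ u - φ v| + 2`; the cost
is therefore `C - X` plus the arrangement cost.

Conversely, let `B` be a binary tree of cost at most `C`. A missing spine edge would cost an extra
`d₂`, which exceeds the slack, so `B` contains the spine (`spine_adj_of_spineSum_le`). In a tree
the distance from `v` along a path decreases and then increases, so the distances from `v` to the
anchors sum to `n - 1` plus twice the distance from `v` to the spine between them
(`anchor_detour`). This is at least `n + 1`, and the slack, smaller than `d₁`, forces equality:
each `v` is adjacent to one of `h_2, …, h_{n+1}`. Each of these already has two spine neighbours,
so the degree bound makes the attachment injective, hence bijective. So `B` contains a caterpillar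
(`eq_caterpillar`), and equals it because a tree is a minimal connected graph.

For `n = 1` the two anchors coincide and `cost_eq` fails, but every arrangement costs `0`.
-/

open Finset SimpleGraph

/-- Vertex set `V ∪ H`: `V = {v_1, …, v_n}` as `Fin n` (0-indexed) and
`H = {h_1, …, h_{n+2}}` as `Fin (n+2)` (0-indexed, so `h_j` is `Sum.inr ⟨j-1, _⟩`). -/
abbrev Vtx (n : ℕ) : Type := Fin n ⊕ Fin (n + 2)

/-- The demand matrix of the reduction, with `d₁ = X + 2m + 1` and `d₂ = (n² + n + 1)·d₁`:
demand `1` between endpoints of edges of `G`, demand `d₁` between each `v ∈ V` and each of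
`h_2`, `h_{n+1}` (0-indexed: `1` and `n`), demand `d₂` between consecutive `h`'s, else `0`. -/
def demand (n m X : ℕ) (G : SimpleGraph (Fin n)) [DecidableRel G.Adj] :
    Vtx n → Vtx n → ℕ
  | Sum.inl i, Sum.inl j => if G.Adj i j then 1 else 0
  | Sum.inl _, Sum.inr j => if j.val = 1 ∨ j.val = n then X + 2 * m + 1 else 0
  | Sum.inr j, Sum.inl _ => if j.val = 1 ∨ j.val = n then X + 2 * m + 1 else 0
  | Sum.inr i, Sum.inr j =>
      if i.val + 1 = j.val ∨ j.val + 1 = i.val then (n ^ 2 + n + 1) * (X + 2 * m + 1) else 0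

lemma demand_symm (n m X : ℕ) (G : SimpleGraph (Fin n)) [DecidableRel G.Adj]
    (x y : Vtx n) : demand n m X G x y = demand n m X G y x := by
  cases x <;> cases y <;> simp [demand, SimpleGraph.adj_comm, or_comm]

/-- The cost of a network `B`: the sum over unordered pairs `{x, y}` of
`W(x,y) · D_B(x,y)` (diagonal pairs contribute `0` since `D_B(x,x) = 0`). -/
noncomputable def cost (n m X : ℕ) (G : SimpleGraph (Fin n)) [DecidableRel G.Adj]
    (B : SimpleGraph (Vtx n)) : ℕ :=
  ∑ p ∈ (Finset.univ : Finset (Vtx n)).sym2,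
    Sym2.lift ⟨fun x y => demand n m X G x y * B.dist x y,
      fun x y => by simp only []; rw [demand_symm, B.dist_comm]⟩ p

/-- The constant `C = (n+1)·d₂ + n·(n+1)·d₁ + X + 2m`. -/
def Cbound (n m X : ℕ) : ℕ :=
  (n + 1) * ((n ^ 2 + n + 1) * (X + 2 * m + 1)) + n * (n + 1) * (X + 2 * m + 1) + X + 2 * m

/-- A binary tree: a connected acyclic simple graph all of whose degrees are at most 3. -/
def IsBinaryTree {n : ℕ} (B : SimpleGraph (Vtx n)) : Prop :=
  B.IsTree ∧ ∀ x : Vtx n, (B.neighborSet x).ncard ≤ 3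

/-- The linear arrangement cost of a bijection `φ : V → {1, …, n}` (formalized as a
permutation of `Fin n`): `Σ_{{u,v} ∈ E} |φ(u) − φ(v)|`. -/
noncomputable def laCost (n : ℕ) (G : SimpleGraph (Fin n)) [DecidableRel G.Adj]
    (φ : Fin n ≃ Fin n) : ℕ :=
  ∑ e ∈ G.edgeFinset,
    Sym2.lift ⟨fun a b => (((φ a : ℕ) : ℤ) - ((φ b : ℕ) : ℤ)).natAbs,
      fun a b => by simp only []; rw [← Int.natAbs_neg, neg_sub]⟩ e

/-! ### Sums over unordered pairs -/

/-- A sum over ordered pairs counts every unordered off-diagonal pair twice. -/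
lemma two_mul_sum_sym2 {α : Type*} [Fintype α] [DecidableEq α] (f : Sym2 α → ℕ)
    (hd : ∀ a, f s(a, a) = 0) :
    2 * ∑ p ∈ (Finset.univ : Finset α).sym2, f p = ∑ x, ∑ y, f s(x, y) := by
  rw [← Fintype.sum_prod_type' (f := fun x y => f s(x, y)), Finset.sym2_univ,
    ← Finset.sum_fiberwise Finset.univ (fun q : α × α => s(q.1, q.2)), Finset.mul_sum]
  refine Finset.sum_congr rfl fun p _ => ?_
  induction p using Sym2.ind with
  | _ a b =>
    have h1 : ∀ q ∈ Finset.univ.filter (fun q : α × α => s(q.1, q.2) = s(a, b)),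
        f s(q.1, q.2) = f s(a, b) := by
      intro q hq
      rw [(Finset.mem_filter.1 hq).2]
    rw [Finset.sum_congr rfl h1]
    by_cases hab : a = b
    · subst hab
      simp [hd]
    · have h2 : Finset.univ.filter (fun q : α × α => s(q.1, q.2) = s(a, b))
          = {(a, b), (b, a)} := by
        ext ⟨x, y⟩
        simp
      rw [h2, Finset.sum_const, Finset.card_pair (by simp [hab])]
      simp

lemma two_mul_sum_edgeFinset {α : Type*} [Fintype α] [DecidableEq α] (G : SimpleGraph α)
    [DecidableRel G.Adj] (f : Sym2 α → ℕ) :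
    2 * ∑ e ∈ G.edgeFinset, f e = ∑ x, ∑ y, if G.Adj x y then f s(x, y) else 0 := by
  have h := two_mul_sum_sym2 (fun e => if e ∈ G.edgeSet then f e else 0) (by simp)
  simp only [SimpleGraph.mem_edgeSet] at h
  rw [← h, Finset.sym2_univ, ← Finset.sum_filter]
  congr 2
  ext e
  simp

lemma sum_consecutive (N : ℕ) (f : Fin (N + 1) → Fin (N + 1) → ℕ) (hf : ∀ i j, f i j = f j i) :
    ∑ i, ∑ j, (if i.val + 1 = j.val ∨ j.val + 1 = i.val then f i j else 0)
      = 2 * ∑ i : Fin N, f i.castSucc i.succ := by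
  have h1 : ∑ i, ∑ j, (if i.val + 1 = j.val then f i j else 0)
      = ∑ i : Fin N, f i.castSucc i.succ := by
    rw [Fin.sum_univ_castSucc]
    have h0 : ∑ j : Fin (N + 1), (if (Fin.last N).val + 1 = j.val then f (Fin.last N) j else 0)
        = 0 := by
      refine Finset.sum_eq_zero fun j _ => if_neg ?_
      simp only [Fin.val_last]
      omega
    rw [h0, add_zero]
    refine Finset.sum_congr rfl fun i _ => ?_
    rw [Finset.sum_eq_single i.succ]
    · simp
    · intro j _ hj
      refine if_neg fun h => hj ?_
      ext
      simp at h ⊢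
      omega
    · simp
  have h2 : ∑ i, ∑ j, (if j.val + 1 = i.val then f i j else 0)
      = ∑ i : Fin N, f i.castSucc i.succ := by
    rw [Finset.sum_comm, ← h1]
    simp only [hf]
  rw [two_mul]
  nth_rewrite 1 [← h1]
  rw [← h2, ← Finset.sum_add_distrib]
  refine Finset.sum_congr rfl fun i _ => ?_
  rw [← Finset.sum_add_distrib]
  refine Finset.sum_congr rfl fun j _ => ?_
  split_ifs <;> omega

/-! ### Splitting the cost -/

/-- The total length of the spine demands `{h_i, h_{i+1}}` in the network `B`. -/
noncomputable def spineSum (n : ℕ) (B : SimpleGraph (Vtx n)) : ℕ :=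
  ∑ i : Fin (n + 1), B.dist (Sum.inr i.castSucc) (Sum.inr i.succ)

/-- The vertex `h_{i+1}` of `H`, indexed by a natural number; meaningful for `i ≤ n + 1`
(larger indices wrap around). -/
def spine (n i : ℕ) : Vtx n := Sum.inr (Fin.ofNat (n + 2) i)

/-- The total distance in `B` from the vertices of `V` to the two anchors `h_2` and `h_{n+1}`. -/
noncomputable def anchorSum (n : ℕ) (B : SimpleGraph (Vtx n)) : ℕ :=
  ∑ v : Fin n, (B.dist (Sum.inl v) (spine n 1) + B.dist (Sum.inl v) (spine n n))

/-- The total distance in `B` between endpoints of edges of `G`. -/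
noncomputable def edgeSum (n : ℕ) (G : SimpleGraph (Fin n)) [DecidableRel G.Adj]
    (B : SimpleGraph (Vtx n)) : ℕ :=
  ∑ e ∈ G.edgeFinset,
    Sym2.lift ⟨fun a b => B.dist (Sum.inl a) (Sum.inl b), fun _ _ => B.dist_comm⟩ e

lemma two_mul_cost (n m X : ℕ) (G : SimpleGraph (Fin n)) [DecidableRel G.Adj]
    (B : SimpleGraph (Vtx n)) :
    2 * cost n m X G B = 2 * edgeSum n G B
      + 2 * ∑ v : Fin n, ∑ j : Fin (n + 2), (if j.val = 1 ∨ j.val = n then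
          (X + 2 * m + 1) * B.dist (Sum.inl v) (Sum.inr j) else 0)
      + 2 * ((n ^ 2 + n + 1) * (X + 2 * m + 1) * spineSum n B) := by
  unfold cost edgeSum spineSum
  rw [two_mul_sum_sym2 _ (by simp), two_mul_sum_edgeFinset,
    Finset.mul_sum (Finset.univ : Finset (Fin (n + 1))),
    ← sum_consecutive (n + 1) (fun i j => (n ^ 2 + n + 1) * (X + 2 * m + 1) *
      B.dist (Sum.inr i) (Sum.inr j)) (fun i j => by rw [B.dist_comm])]
  have hc : ∑ j : Fin (n + 2), ∑ v : Fin n, (if j.val = 1 ∨ j.val = n then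
          (X + 2 * m + 1) * B.dist (Sum.inr j) (Sum.inl v) else 0)
      = ∑ v : Fin n, ∑ j : Fin (n + 2), (if j.val = 1 ∨ j.val = n then
          (X + 2 * m + 1) * B.dist (Sum.inl v) (Sum.inr j) else 0) := by
    rw [Finset.sum_comm]
    simp only [B.dist_comm]
  simp only [Fintype.sum_sum_type, Sym2.lift_mk, demand, ite_mul, zero_mul, one_mul,
    Finset.sum_add_distrib]
  rw [hc]
  ring

lemma spine_val {n i : ℕ} (h : i < n + 2) : spine n i = Sum.inr ⟨i, h⟩ := by
  simp only [spine, Sum.inr.injEq]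
  ext
  simp [Nat.mod_eq_of_lt h]

lemma sum_anchor_single (n k : ℕ) (hk : k < n + 2) (f : Fin (n + 2) → ℕ) :
    ∑ j : Fin (n + 2), (if j.val = k then f j else 0) = f ⟨k, hk⟩ := by
  rw [Finset.sum_eq_single ⟨k, hk⟩]
  · simp
  · intro j _ hj
    exact if_neg fun h => hj (Fin.ext h)
  · simp

/-- For `n = 1` the two anchors coincide and the demand `d₁` is counted only once, so in general
only an inequality holds. -/
lemma cost_le (n m X : ℕ) (G : SimpleGraph (Fin n)) [DecidableRel G.Adj]
    (B : SimpleGraph (Vtx n)) :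
    cost n m X G B ≤ (n ^ 2 + n + 1) * (X + 2 * m + 1) * spineSum n B
      + (X + 2 * m + 1) * anchorSum n B + edgeSum n G B := by
  have h := two_mul_cost n m X G B
  have h2 : ∑ v : Fin n, ∑ j : Fin (n + 2), (if j.val = 1 ∨ j.val = n then
          (X + 2 * m + 1) * B.dist (Sum.inl v) (Sum.inr j) else 0)
      ≤ (X + 2 * m + 1) * anchorSum n B := by
    unfold anchorSum
    rw [Finset.mul_sum]
    refine Finset.sum_le_sum fun v _ => ?_
    rw [spine_val (show 1 < n + 2 by omega), spine_val (show n < n + 2 by omega), mul_add,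
      ← sum_anchor_single n 1 _ (fun j => (X + 2 * m + 1) * B.dist (Sum.inl v) (Sum.inr j)),
      ← sum_anchor_single n n _ (fun j => (X + 2 * m + 1) * B.dist (Sum.inl v) (Sum.inr j)),
      ← Finset.sum_add_distrib]
    refine Finset.sum_le_sum fun j _ => ?_
    split_ifs <;> simp_all
  omega

lemma cost_eq (n m X : ℕ) (hn : 2 ≤ n) (G : SimpleGraph (Fin n)) [DecidableRel G.Adj]
    (B : SimpleGraph (Vtx n)) :
    cost n m X G B = (n ^ 2 + n + 1) * (X + 2 * m + 1) * spineSum n B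
      + (X + 2 * m + 1) * anchorSum n B + edgeSum n G B := by
  have h := two_mul_cost n m X G B
  have h2 : ∑ v : Fin n, ∑ j : Fin (n + 2), (if j.val = 1 ∨ j.val = n then
          (X + 2 * m + 1) * B.dist (Sum.inl v) (Sum.inr j) else 0)
      = (X + 2 * m + 1) * anchorSum n B := by
    unfold anchorSum
    rw [Finset.mul_sum]
    refine Finset.sum_congr rfl fun v _ => ?_
    rw [spine_val (show 1 < n + 2 by omega), spine_val (show n < n + 2 by omega), mul_add,
      ← sum_anchor_single n 1 _ (fun j => (X + 2 * m + 1) * B.dist (Sum.inl v) (Sum.inr j)),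
      ← sum_anchor_single n n _ (fun j => (X + 2 * m + 1) * B.dist (Sum.inl v) (Sum.inr j)),
      ← Finset.sum_add_distrib]
    refine Finset.sum_congr rfl fun j _ => ?_
    split_ifs <;> omega
  omega

/-! ### The caterpillar of a linear arrangement -/

/-- The caterpillar of the arrangement `φ`: the path `h_1, …, h_{n+2}`, with the vertex at
position `p ∈ {1, …, n}` attached as a leaf to `h_{p+1}`. -/
def caterpillar {n : ℕ} (φ : Fin n ≃ Fin n) : SimpleGraph (Vtx n) where
  Adj
    | Sum.inl _, Sum.inl _ => False
    | Sum.inl v, Sum.inr j => j.val = (φ v).val + 1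
    | Sum.inr j, Sum.inl v => j.val = (φ v).val + 1
    | Sum.inr i, Sum.inr j => i.val + 1 = j.val ∨ j.val + 1 = i.val
  symm := ⟨by rintro (v | i) (w | j) h <;> simp_all [or_comm]⟩
  loopless := ⟨by rintro (v | i) <;> simp⟩

/-- The index of the spine vertex carrying `x`. -/
def pos {n : ℕ} (φ : Fin n ≃ Fin n) : Vtx n → ℕ
  | Sum.inl v => (φ v).val + 1
  | Sum.inr j => j.val

/-- The distance from `x` to the spine. -/
def leg {n : ℕ} : Vtx n → ℕ
  | Sum.inl _ => 1
  | Sum.inr _ => 0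

lemma caterpillar_spine_walk {n : ℕ} (φ : Fin n ≃ Fin n) (k : ℕ) :
    ∀ i j : Fin (n + 2), i.val + k = j.val →
      ∃ p : (caterpillar φ).Walk (Sum.inr i) (Sum.inr j), p.length = k := by
  induction k with
  | zero =>
    intro i j h
    obtain rfl : i = j := Fin.ext (by omega)
    exact ⟨.nil, rfl⟩
  | succ k ih =>
    intro i j h
    obtain ⟨p, hp⟩ := ih ⟨i.val + 1, by omega⟩ j (by simp; omega)
    refine ⟨.cons (show (caterpillar φ).Adj _ (Sum.inr ⟨i.val + 1, by omega⟩) from ?_) p, ?_⟩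
    · simp [caterpillar]
    · simp [hp]

lemma caterpillar_leaf_walk {n : ℕ} (φ : Fin n ≃ Fin n) (x : Vtx n) :
    ∃ j : Fin (n + 2), j.val = pos φ x ∧
      ∃ p : (caterpillar φ).Walk x (Sum.inr j), p.length = leg x := by
  rcases x with v | j
  · refine ⟨⟨(φ v).val + 1, by omega⟩, rfl, ?_⟩
    have : (caterpillar φ).Adj (Sum.inl v) (Sum.inr ⟨(φ v).val + 1, by omega⟩) := by
      simp [caterpillar]
    exact ⟨this.toWalk, rfl⟩
  · exact ⟨j, rfl, .nil, rfl⟩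

lemma caterpillar_walk {n : ℕ} (φ : Fin n ≃ Fin n) (x y : Vtx n) :
    ∃ p : (caterpillar φ).Walk x y,
      p.length = leg x + ((pos φ x : ℤ) - (pos φ y : ℤ)).natAbs + leg y := by
  obtain ⟨i, hi, p, hp⟩ := caterpillar_leaf_walk φ x
  obtain ⟨j, hj, q, hq⟩ := caterpillar_leaf_walk φ y
  rcases le_total i.val j.val with hij | hij
  · obtain ⟨r, hr⟩ := caterpillar_spine_walk φ (j.val - i.val) i j (by omega)
    exact ⟨(p.append r).append q.reverse, by simp [hp, hq, hr]; omega⟩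
  · obtain ⟨r, hr⟩ := caterpillar_spine_walk φ (i.val - j.val) j i (by omega)
    exact ⟨(p.append r.reverse).append q.reverse, by simp [hp, hq, hr]; omega⟩

lemma caterpillar_connected {n : ℕ} (φ : Fin n ≃ Fin n) : (caterpillar φ).Connected :=
  { preconnected := fun x y => ⟨(caterpillar_walk φ x y).choose⟩
    nonempty := ⟨Sum.inr 0⟩ }

/-- A function that grows by at most `1` along every edge bounds walk lengths from below. -/
lemma le_add_length {α : Type*} {G : SimpleGraph α} (f : α → ℕ)
    (hf : ∀ x y, G.Adj x y → f y ≤ f x + 1) {x y : α} (p : G.Walk x y) :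
    f y ≤ f x + p.length := by
  induction p with
  | nil => simp
  | cons h p ih =>
    have := hf _ _ h
    simp only [SimpleGraph.Walk.length_cons]
    omega

lemma caterpillar_dist {n : ℕ} (φ : Fin n ≃ Fin n) {x y : Vtx n} (hxy : x ≠ y) :
    (caterpillar φ).dist x y
      = leg x + ((pos φ x : ℤ) - (pos φ y : ℤ)).natAbs + leg y := by
  classical
  obtain ⟨p, hp⟩ := caterpillar_walk φ x y
  refine le_antisymm (hp ▸ SimpleGraph.dist_le p) ?_
  obtain ⟨q, hq⟩ := (caterpillar_connected φ).exists_walk_length_eq_dist x y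
  -- The claimed distance from `x` is itself `1`-Lipschitz along the edges.
  have h := le_add_length (fun z => if x = z then 0 else
    leg x + ((pos φ x : ℤ) - (pos φ z : ℤ)).natAbs + leg z) ?_ q
  · simp only [if_neg hxy, if_true] at h
    omega
  · rintro a b hab
    have key : ((pos φ a : ℤ) - (pos φ b : ℤ)).natAbs + leg a + leg b ≤ 1 ∧
        (leg a = 0 ∨ leg b = 0) := by
      rcases a with v | i <;> rcases b with w | j <;> simp [caterpillar, pos, leg] at hab ⊢ <;>
        omega
    by_cases hb : x = b
    · simp [hb]
    rw [if_neg hb]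
    by_cases ha : x = a
    · subst ha
      simp only [if_true]
      omega
    · rw [if_neg ha]
      omega

/-- The neighbour of `x` in a caterpillar on the way to `h_1`. -/
def parent {n : ℕ} (φ : Fin n ≃ Fin n) : Vtx n → Vtx n
  | Sum.inl v => Sum.inr ⟨(φ v).val + 1, by omega⟩
  | Sum.inr j => Sum.inr ⟨j.val - 1, by omega⟩

/-- Every edge joins a vertex other than `h_1` to its parent, so there are too few edges for a
cycle. -/
lemma caterpillar_isTree {n : ℕ} (φ : Fin n ≃ Fin n) : (caterpillar φ).IsTree := by
  classical
  rw [SimpleGraph.isTree_iff_connected_and_card]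
  refine ⟨caterpillar_connected φ,
    le_antisymm ?_ (caterpillar_connected φ).card_vert_le_card_edgeSet_add_one⟩
  have hsub : (caterpillar φ).edgeSet ⊆
      ((Finset.univ.erase (Sum.inr ⟨0, by omega⟩)).image (fun x : Vtx n => s(x, parent φ x)) :
        Finset (Sym2 (Vtx n))) := by
    intro e
    induction e using Sym2.ind with
    | _ a b =>
      intro h
      rw [SimpleGraph.mem_edgeSet] at h
      have : (a ≠ Sum.inr ⟨0, by omega⟩ ∧ parent φ a = b) ∨
          (b ≠ Sum.inr ⟨0, by omega⟩ ∧ parent φ b = a) := by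
        rcases a with v | i <;> rcases b with w | j <;>
          simp only [caterpillar, parent, ne_eq, reduceCtorEq, Sum.inr.injEq, Fin.ext_iff,
            not_false_eq_true, true_and, and_false, or_false, false_or] at h ⊢ <;> omega
      simp only [Finset.coe_image, Finset.coe_erase, Set.mem_image]
      rcases this with ⟨h1, h2⟩ | ⟨h1, h2⟩
      · exact ⟨a, by simpa using h1, by rw [h2]⟩
      · exact ⟨b, by simpa using h1, by rw [h2, Sym2.eq_swap]⟩
  have h1 := Set.ncard_le_ncard hsub (Finset.finite_toSet _)
  rw [Set.ncard_coe_finset] at h1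
  have h2 := Finset.card_image_le (s := Finset.univ.erase (Sum.inr ⟨0, by omega⟩))
    (f := fun x : Vtx n => s(x, parent φ x))
  rw [Finset.card_erase_of_mem (Finset.mem_univ _), Finset.card_univ] at h2
  change _ ≤ Fintype.card (Vtx n) - 1 at h2
  have h3 : 0 < Fintype.card (Vtx n) := Fintype.card_pos_iff.2 ⟨Sum.inr 0⟩
  rw [Nat.card_coe_set_eq, Nat.card_eq_fintype_card]
  omega

lemma caterpillar_degree {n : ℕ} (hn : 1 ≤ n) (φ : Fin n ≃ Fin n) (x : Vtx n) :
    ((caterpillar φ).neighborSet x).ncard ≤ 3 := by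
  classical
  have : ∃ s : Finset (Vtx n), s.card ≤ 3 ∧ (caterpillar φ).neighborSet x ⊆ s := by
    rcases x with v | i
    · refine ⟨{parent φ (Sum.inl v)}, by simp, ?_⟩
      rintro (w | j) h <;>
        simp [caterpillar, parent, Fin.ext_iff] at h ⊢ <;> omega
    · refine ⟨{Sum.inr ⟨i.val - 1, by omega⟩, Sum.inr (Fin.ofNat (n + 2) (i.val + 1)),
        Sum.inl (φ.symm ⟨(i.val - 1) % n, Nat.mod_lt _ hn⟩)}, Finset.card_le_three, ?_⟩
      rintro (w | j) h
      · simp only [SimpleGraph.mem_neighborSet, caterpillar] at h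
        have : w = φ.symm ⟨(i.val - 1) % n, Nat.mod_lt _ hn⟩ := by
          rw [Equiv.eq_symm_apply]
          ext
          simp [h, Nat.mod_eq_of_lt]
        simp [this]
      · simp only [SimpleGraph.mem_neighborSet, caterpillar] at h
        rcases h with h | h
        · have : j = Fin.ofNat (n + 2) (i.val + 1) := by
            ext
            simp [h]
          simp [this]
        · have : j = ⟨i.val - 1, by omega⟩ := by
            ext
            simp
            omega
          simp [this]
  obtain ⟨s, hs, hsub⟩ := this
  exact (Set.ncard_le_ncard hsub s.finite_toSet).trans (by rwa [Set.ncard_coe_finset])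

lemma caterpillar_spineSum {n : ℕ} (φ : Fin n ≃ Fin n) :
    spineSum n (caterpillar φ) = n + 1 := by
  have : ∀ i : Fin (n + 1),
      (caterpillar φ).dist (Sum.inr i.castSucc) (Sum.inr i.succ) = 1 := by
    intro i
    rw [SimpleGraph.dist_eq_one_iff_adj]
    simp [caterpillar]
  simp [spineSum, this]

lemma caterpillar_anchorSum {n : ℕ} (hn : 1 ≤ n) (φ : Fin n ≃ Fin n) :
    anchorSum n (caterpillar φ) = n * (n + 1) := by
  have : ∀ v : Fin n, (caterpillar φ).dist (Sum.inl v) (spine n 1)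
      + (caterpillar φ).dist (Sum.inl v) (spine n n) = n + 1 := by
    intro v
    rw [spine_val (show 1 < n + 2 by omega), spine_val (show n < n + 2 by omega),
      caterpillar_dist φ (by simp), caterpillar_dist φ (by simp)]
    simp only [leg, pos]
    omega
  simp [anchorSum, this]

lemma caterpillar_edgeSum {n : ℕ} (G : SimpleGraph (Fin n)) [DecidableRel G.Adj]
    (φ : Fin n ≃ Fin n) :
    edgeSum n G (caterpillar φ) = laCost n G φ + 2 * G.edgeFinset.card := by
  unfold edgeSum laCost
  rw [mul_comm, ← smul_eq_mul, ← Finset.sum_const, ← Finset.sum_add_distrib]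
  refine Finset.sum_congr rfl fun e he => ?_
  induction e using Sym2.ind with
  | _ a b =>
    rw [SimpleGraph.mem_edgeFinset, SimpleGraph.mem_edgeSet] at he
    simp only [Sym2.lift_mk]
    rw [caterpillar_dist φ (by simpa using he.ne)]
    simp only [leg, pos]
    omega

/-! ### Distances to a path in a tree -/

/-- In a tree a vertex has at most one neighbour closer to a given vertex `v`. -/
lemma closer_neighbor_unique {α : Type*} {B : SimpleGraph α} (hB : B.IsTree) {v x a b : α}
    (ha : B.Adj a x) (hb : B.Adj b x) (hda : B.dist v x = B.dist v a + 1)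
    (hdb : B.dist v x = B.dist v b + 1) : a = b := by
  obtain ⟨p, hp⟩ := hB.connected.exists_walk_length_eq_dist v a
  obtain ⟨q, hq⟩ := hB.connected.exists_walk_length_eq_dist v b
  have hp' := (p.concat ha).isPath_of_length_eq_dist (by simp [hp, hda])
  have hq' := (q.concat hb).isPath_of_length_eq_dist (by simp [hq, hdb])
  have h := congrArg Subtype.val ((hB.isAcyclic.subsingleton_path v x).elim ⟨_, hp'⟩ ⟨_, hq'⟩)
  simpa using congrArg SimpleGraph.Walk.penultimate h

/-- A sequence with steps `±1` and no interior local maximum decreases to its minimum and then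
increases, so the sum of two values is determined by the minimum between them. -/
lemma v_shape (g : ℕ → ℕ) (N : ℕ)
    (step : ∀ i < N, g i = g (i + 1) + 1 ∨ g (i + 1) = g i + 1)
    (nomax : ∀ i, i + 1 < N → ¬(g (i + 1) = g i + 1 ∧ g (i + 1) = g (i + 2) + 1))
    (a k : ℕ) (hk : a + k ≤ N) :
    ∃ c, a ≤ c ∧ c ≤ a + k ∧ g a + g (a + k) = k + 2 * g c := by
  -- A descent at `b` forces descents at all earlier indices.
  have desc : ∀ l b, l ≤ b → b < N → g b = g (b + 1) + 1 →
      g (b - l) = g (b + 1) + (l + 1) := by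
    intro l
    induction l with
    | zero => intro b _ _ hd; simpa using hd
    | succ l ih =>
      rintro (_ | b) hl hb hd
      · omega
      rcases step b (by omega) with h | h
      · have h1 := ih b (by omega) (by omega) h
        rw [Nat.add_sub_add_right, h1, hd]
        ring
      · exact absurd ⟨h, hd⟩ (nomax b hb)
  induction k with
  | zero => exact ⟨a, le_rfl, le_rfl, by simp; ring⟩
  | succ k ih =>
    rcases step (a + k) (by omega) with h | h
    · refine ⟨a + (k + 1), by omega, le_rfl, ?_⟩
      have := desc k (a + k) (by omega) (by omega) h
      simp only [Nat.add_sub_cancel] at this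
      rw [← add_assoc, this]
      ring
    · obtain ⟨c, h1, h2, h3⟩ := ih (by omega)
      exact ⟨c, h1, by omega, by rw [← add_assoc, h]; omega⟩

/-! ### Cheap binary trees are caterpillars -/

lemma spine_adj_of_spineSum_le {n : ℕ} {B : SimpleGraph (Vtx n)} (hB : B.Connected)
    (h : spineSum n B ≤ n + 1) (i : ℕ) (hi : i < n + 1) :
    B.Adj (spine n i) (spine n (i + 1)) := by
  have hpos : ∀ i ∈ (Finset.univ : Finset (Fin (n + 1))),
      1 ≤ B.dist (Sum.inr i.castSucc) (Sum.inr i.succ) := fun i _ =>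
    hB.pos_dist_of_ne (by simp [Fin.ext_iff])
  have hle := Finset.sum_le_sum hpos
  have heq : ∑ _i : Fin (n + 1), 1
      = ∑ i : Fin (n + 1), B.dist (Sum.inr i.castSucc) (Sum.inr i.succ) := by
    refine le_antisymm hle (le_trans h ?_)
    simp
  have := (Finset.sum_eq_sum_iff_of_le hpos).1 heq ⟨i, hi⟩ (Finset.mem_univ _)
  rw [spine_val (show i < n + 2 by omega), spine_val (show i + 1 < n + 2 by omega)]
  exact SimpleGraph.dist_eq_one_iff_adj.1 this.symm

/-- The detour from one anchor to the other through a vertex `v` exceeds the length `n - 1` of the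
spine between them by twice the distance from `v` to that part of the spine. -/
lemma anchor_detour {n : ℕ} (hn : 1 ≤ n) {B : SimpleGraph (Vtx n)} (hB : B.IsTree)
    (hadj : ∀ i < n + 1, B.Adj (spine n i) (spine n (i + 1))) (x : Vtx n) :
    ∃ c, 1 ≤ c ∧ c ≤ n ∧
      B.dist x (spine n 1) + B.dist x (spine n n) = (n - 1) + 2 * B.dist x (spine n c) := by
  obtain ⟨c, h1, h2, h3⟩ := v_shape (fun i => B.dist x (spine n i)) (n + 1)
    (fun i hi => hB.dist_eq_dist_add_one_of_adj x (hadj i hi))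
    (fun i hi h => by
      have := closer_neighbor_unique hB (hadj i (by omega)) (hadj (i + 1) hi).symm h.1 h.2
      rw [spine_val (show i < n + 2 by omega), spine_val (show i + 1 + 1 < n + 2 by omega)] at this
      simp [Fin.ext_iff] at this
      omega) 1 (n - 1) (by omega)
  have e : 1 + (n - 1) = n := by omega
  simp only [e] at h2 h3
  exact ⟨c, h1, h2, h3⟩

/-- If `B` contains the spine and every vertex of `V` hangs off one of `h_2, …, h_{n+1}`, the degree
bound leaves room for one vertex of `V` at each of them, so `B` is a caterpillar. -/
lemma eq_caterpillar {n : ℕ} {B : SimpleGraph (Vtx n)} (hB : IsBinaryTree B)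
    (hadj : ∀ i < n + 1, B.Adj (spine n i) (spine n (i + 1)))
    (hleaf : ∀ v : Fin n, ∃ c, 1 ≤ c ∧ c ≤ n ∧ B.Adj (Sum.inl v) (spine n c)) :
    ∃ φ : Fin n ≃ Fin n, B = caterpillar φ := by
  choose c hc1 hc2 hc3 using hleaf
  have hinj : Function.Injective fun v =>
      (⟨c v - 1, by have := hc1 v; have := hc2 v; omega⟩ : Fin n) := by
    intro v w hvw
    by_contra hne
    have hcvw : c v = c w := by
      have := hc1 v
      have := hc1 w
      simp only [Fin.mk.injEq] at hvw
      omega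
    have h1 := hc1 v
    have h2 := hc2 v
    have a1 := (hadj (c v - 1) (by omega)).symm
    have a2 := hadj (c v) (by omega)
    rw [Nat.sub_add_cancel h1] at a1
    -- The two spine neighbours together with `v` and `w` would be four neighbours.
    have hsub : (({spine n (c v - 1), spine n (c v + 1), Sum.inl v, Sum.inl w} :
        Finset (Vtx n)) : Set (Vtx n)) ⊆ B.neighborSet (spine n (c v)) := by
      intro y hy
      simp only [Finset.coe_insert, Finset.coe_singleton, Set.mem_insert_iff,
        Set.mem_singleton_iff] at hy
      rcases hy with rfl | rfl | rfl | rfl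
      · exact a1
      · exact a2
      · exact (hc3 v).symm
      · rw [hcvw]
        exact (hc3 w).symm
    have h3 := (Set.ncard_le_ncard hsub (Set.toFinite _)).trans (hB.2 _)
    rw [Set.ncard_coe_finset, spine_val (show c v - 1 < n + 2 by omega),
      spine_val (show c v + 1 < n + 2 by omega)] at h3
    have h4 : ¬ (c v - 1 = c v + 1) := by omega
    rw [Finset.card_insert_of_notMem (by simp [h4]), Finset.card_insert_of_notMem (by simp),
      Finset.card_pair (by simpa using hne)] at h3
    omega
  refine ⟨Equiv.ofBijective _ (Finite.injective_iff_bijective.1 hinj), ?_⟩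
  set φ := Equiv.ofBijective _ (Finite.injective_iff_bijective.1 hinj) with hφ
  have hφv : ∀ v, (φ v).val + 1 = c v := fun v => by
    have := hc1 v
    simp only [hφ, Equiv.ofBijective_apply]
    omega
  have hle : caterpillar φ ≤ B := by
    have hs : ∀ i j : Fin (n + 2), i.val + 1 = j.val → B.Adj (Sum.inr i) (Sum.inr j) := by
      intro i j h
      have := hadj i.val (by omega)
      rw [spine_val (show i.val < n + 2 by omega),
        spine_val (show i.val + 1 < n + 2 by omega)] at this
      simpa [h] using this
    have hl : ∀ (v : Fin n) (j : Fin (n + 2)), j.val = (φ v).val + 1 →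
        B.Adj (Sum.inl v) (Sum.inr j) := by
      intro v j h
      have := hc3 v
      rw [← hφv v, ← h, spine_val j.isLt] at this
      exact this
    rintro (v | i) (w | j) h <;> simp only [caterpillar] at h
    · exact hl v j h
    · exact (hl w i h).symm
    · rcases h with h | h
      · exact hs i j h
      · exact (hs j i h).symm
  exact le_antisymm ((SimpleGraph.isTree_iff_minimal_connected.1 hB.1).2
    (caterpillar_connected φ) hle) hle

lemma exists_caterpillar_of_cost_le (n m X : ℕ) (hn : 2 ≤ n) (G : SimpleGraph (Fin n))
    [DecidableRel G.Adj] {B : SimpleGraph (Vtx n)} (hB : IsBinaryTree B)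
    (hc : cost n m X G B ≤ Cbound n m X) : ∃ φ : Fin n ≃ Fin n, B = caterpillar φ := by
  rw [cost_eq n m X hn, Cbound] at hc
  set d := X + 2 * m + 1 with hd
  -- One missing spine edge already costs `d₂ > n (n + 1) d₁ + X + 2 m`.
  have hS1 : spineSum n B ≤ n + 1 := by
    by_contra! hlt
    have := Nat.mul_le_mul_left ((n ^ 2 + n + 1) * d) (show n + 2 ≤ spineSum n B from hlt)
    nlinarith
  have hadj := spine_adj_of_spineSum_le hB.1.connected hS1
  refine eq_caterpillar hB hadj ?_
  have hS1' : n + 1 ≤ spineSum n B := by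
    unfold spineSum
    refine le_trans ?_ (Finset.card_nsmul_le_sum Finset.univ _ 1 fun i _ =>
      hB.1.connected.pos_dist_of_ne (by simp [Fin.ext_iff]))
    simp
  -- With the spine paid for, less than `d₁` is left above the minimum `n (n + 1) d₁`.
  have hS2 : anchorSum n B ≤ n * (n + 1) := by
    by_contra! hlt
    have h1 := Nat.mul_le_mul_left ((n ^ 2 + n + 1) * d) hS1'
    have h2 := Nat.mul_le_mul_left d (show n * (n + 1) + 1 ≤ anchorSum n B from hlt)
    nlinarith
  have hge : ∀ v ∈ (Finset.univ : Finset (Fin n)), n + 1 ≤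
      B.dist (Sum.inl v) (spine n 1) + B.dist (Sum.inl v) (spine n n) := by
    intro v _
    obtain ⟨c, h1, h2, h3⟩ := anchor_detour (by omega) hB.1 hadj (Sum.inl v)
    have : 0 < B.dist (Sum.inl v) (spine n c) :=
      hB.1.connected.pos_dist_of_ne (by simp [spine])
    omega
  have heq : ∑ _v : Fin n, (n + 1) = anchorSum n B := by
    refine le_antisymm (Finset.sum_le_sum hge) ?_
    simpa using hS2
  intro v
  have hv := (Finset.sum_eq_sum_iff_of_le hge).1 heq v (Finset.mem_univ _)
  obtain ⟨c, h1, h2, h3⟩ := anchor_detour (by omega) hB.1 hadj (Sum.inl v)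
  exact ⟨c, h1, h2, SimpleGraph.dist_eq_one_iff_adj.1 (by omega)⟩

/-- There exists a bijection `φ : V → {1, …, n}` with linear arrangement
cost at most `X` if and only if there exists a binary tree `B` on `V ∪ H` with
`cost(B) ≤ C`. -/
theorem ola_iff_obt (n m X : ℕ) (hn : 1 ≤ n) (G : SimpleGraph (Fin n))
    [DecidableRel G.Adj] (hm : G.edgeFinset.card = m) :
    (∃ φ : Fin n ≃ Fin n, laCost n G φ ≤ X) ↔
      ∃ B : SimpleGraph (Vtx n), IsBinaryTree B ∧ cost n m X G B ≤ Cbound n m X := by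
  constructor
  · rintro ⟨φ, hφ⟩
    refine ⟨caterpillar φ, ⟨caterpillar_isTree φ, caterpillar_degree hn φ⟩, ?_⟩
    refine (cost_le n m X G _).trans ?_
    rw [caterpillar_spineSum, caterpillar_anchorSum hn, caterpillar_edgeSum, hm, Cbound]
    nlinarith
  · rintro ⟨B, hB, hc⟩
    rcases Nat.lt_or_ge n 2 with h2 | h2
    · -- On a single vertex every arrangement costs `0`.
      obtain rfl : n = 1 := by omega
      refine ⟨Equiv.refl _, ?_⟩
      have : laCost 1 G (Equiv.refl _) = 0 := by
        refine Finset.sum_eq_zero fun e _ => ?_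
        induction e using Sym2.ind with
        | _ a b => simp [Subsingleton.elim a b]
      omega
    · obtain ⟨φ, rfl⟩ := exists_caterpillar_of_cost_le n m X h2 G hB hc
      refine ⟨φ, ?_⟩
      rw [cost_eq n m X h2, caterpillar_spineSum, caterpillar_anchorSum hn, caterpillar_edgeSum,
        hm, Cbound] at hc
      nlinarith
end

section
/- Let B be a binary tree on V ∪ H with cost(B) ≤ C. Then for every 1 ≤ i ≤ n+1, the vertices h_i and h_{i+1} are adjacent in B, i.e., D_B(h_i, h_{i+1}) = 1. Equivalently, if some pair h_i, h_{i+1} with 1 ≤ i ≤ n+1 satisfies D_B(h_i, h_{i+1}) ≥ 2, then cost(B) ≥ C + 1. -/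
/-!
With `d₁ = X + 2m + 1` and `d₂ = (n² + n + 1)·d₁`, the bound satisfies `C + 1 = (n + 2)·d₂`.
The `n + 1` pairs `h_i, h_{i+1}` alone contribute `d₂ · ∑ D_B(h_i, h_{i+1})` to the cost
(`demand_mul_sum_dist_le_cost`). Each of these distances is at least `1` because `B` is connected,
so a single distance that is at least `2` makes their sum at least `n + 2` and the cost at least
`C + 1`.
-/

open Finset SimpleGraph

/-- The consecutive pairs `h_i, h_{i+1}` are distinct unordered pairs, so their total contribution
is a lower bound for the cost. -/
lemma demand_mul_sum_dist_le_cost (n m X : ℕ) (G : SimpleGraph (Fin n)) [DecidableRel G.Adj]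
    (B : SimpleGraph (Vtx n)) :
    (n ^ 2 + n + 1) * (X + 2 * m + 1) *
      ∑ i : Fin (n + 1), B.dist (Sum.inr i.castSucc) (Sum.inr i.succ) ≤ cost n m X G B := by
  classical
  let e : Fin (n + 1) → Sym2 (Vtx n) := fun i => s(Sum.inr i.castSucc, Sum.inr i.succ)
  have he : Function.Injective e := by
    intro i j hij
    simp only [e, Sym2.eq_iff, Sum.inr.injEq, Fin.ext_iff, Fin.val_castSucc, Fin.val_succ] at hij
    ext
    omega
  unfold cost
  calc _ = ∑ p ∈ Finset.univ.image e, Sym2.lift ⟨fun x y => demand n m X G x y * B.dist x y,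
        fun x y => by simp only []; rw [demand_symm, B.dist_comm]⟩ p := by
        rw [Finset.sum_image he.injOn, Finset.mul_sum]
        refine Finset.sum_congr rfl fun i _ => ?_
        simp [e, demand]
    _ ≤ _ := Finset.sum_le_sum_of_subset (by simp)

lemma one_le_dist_consecutive {n : ℕ} {B : SimpleGraph (Vtx n)} (hB : B.Connected)
    (i : Fin (n + 1)) : 1 ≤ B.dist (Sum.inr i.castSucc) (Sum.inr i.succ) :=
  hB.pos_dist_of_ne (by simp [Fin.ext_iff])

lemma Cbound_succ (n m X : ℕ) :
    Cbound n m X + 1 = (n ^ 2 + n + 1) * (X + 2 * m + 1) * (n + 2) := by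
  unfold Cbound
  ring

lemma Cbound_lt_cost (n m X : ℕ) (G : SimpleGraph (Fin n)) [DecidableRel G.Adj]
    {B : SimpleGraph (Vtx n)} (hB : B.Connected) (i : Fin (n + 1))
    (hi : 2 ≤ B.dist (Sum.inr i.castSucc) (Sum.inr i.succ)) :
    Cbound n m X + 1 ≤ cost n m X G B := by
  have hlt : ∑ _j : Fin (n + 1), 1 <
      ∑ j : Fin (n + 1), B.dist (Sum.inr j.castSucc) (Sum.inr j.succ) :=
    Finset.sum_lt_sum (fun j _ => one_le_dist_consecutive hB j) ⟨i, Finset.mem_univ i, hi⟩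
  have hsum : n + 2 ≤ ∑ j : Fin (n + 1), B.dist (Sum.inr j.castSucc) (Sum.inr j.succ) := by
    simp only [Finset.sum_const, Finset.card_univ, Fintype.card_fin, smul_eq_mul, mul_one] at hlt
    omega
  rw [Cbound_succ]
  exact (Nat.mul_le_mul_left _ hsum).trans (demand_mul_sum_dist_le_cost n m X G B)

/-- Let `B` be a binary tree on `V ∪ H`.  If `cost(B) ≤ C`, then for
every `1 ≤ i ≤ n+1` the vertices `h_i` and `h_{i+1}` are adjacent in `B`, i.e.
`D_B(h_i, h_{i+1}) = 1` (0-indexed: `h_i` is `Sum.inr i.castSucc`, `h_{i+1}` is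
`Sum.inr i.succ` for `i : Fin (n+1)`).  Equivalently, if some such pair satisfies
`D_B(h_i, h_{i+1}) ≥ 2`, then `cost(B) ≥ C + 1`. -/
theorem h_path_in_cheap_tree (n m X : ℕ) (hn : 1 ≤ n) (G : SimpleGraph (Fin n))
    [DecidableRel G.Adj] (hm : G.edgeFinset.card = m)
    (B : SimpleGraph (Vtx n)) (hB : IsBinaryTree B) :
    (cost n m X G B ≤ Cbound n m X →
      ∀ i : Fin (n + 1), B.Adj (Sum.inr i.castSucc) (Sum.inr i.succ) ∧
        B.dist (Sum.inr i.castSucc) (Sum.inr i.succ) = 1) ∧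
    ((∃ i : Fin (n + 1), 2 ≤ B.dist (Sum.inr i.castSucc) (Sum.inr i.succ)) →
      Cbound n m X + 1 ≤ cost n m X G B) := by
  have hconn : B.Connected := hB.1.connected
  refine ⟨fun hcost i => ?_, fun ⟨i, hi⟩ => Cbound_lt_cost n m X G hconn i hi⟩
  have hdist : B.dist (Sum.inr i.castSucc) (Sum.inr i.succ) = 1 := by
    have h1 := one_le_dist_consecutive hconn i
    by_contra hne
    have h2 := Cbound_lt_cost n m X G hconn i (by omega)
    omega
  exact ⟨SimpleGraph.dist_eq_one_iff_adj.mp hdist, hdist⟩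
end

section
/- Let B be a binary tree on V ∪ H in which h_i and h_{i+1} are adjacent for every 1 ≤ i ≤ n+1 (so h_1, …, h_{n+2} form a path). Then for every v ∈ V, D_B(v, h_2) + D_B(v, h_{n+1}) ≥ n + 1, and equality holds if and only if v is adjacent in B to some h_j with 2 ≤ j ≤ n+1. -/
/-!
Fix `v ∈ V` and put `f k = D_B(v, h_k)`, with the `h`'s indexed from `0` to `n + 1`. In a tree
the distances from `v` to two adjacent vertices differ by exactly one, and a vertex has only one neighbour closer to `v`
(`eq_of_adj_of_dist_add_one`). So along the path of the `h`'s the sequence `f` moves in steps of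
`±1` and has no local maximum; it therefore decreases to a minimum `f m` and increases afterwards
(`exists_valley`). This gives
`f 1 + f n = 2 * f m + (n - 1)` for some `1 ≤ m ≤ n`. Since `v` is not one of the `h`'s, `f m ≥ 1`,
which is the inequality, and equality forces `f m = 1`, that is, `v` adjacent to `h_m`.
Conversely, if `f j = 1` with `1 ≤ j ≤ n`, then walking from `j` to `1` and to `n` in steps of size one
(`le_add_of_steps`) gives `f 1 + f n ≤ j + (n - j + 1) = n + 1`.
-/

open Finset SimpleGraph

/-- In a tree, a vertex `a` has at most one neighbour closer to `u`: appending `a` to geodesics from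
`u` to two such neighbours yields two paths from `u` to `a`, which must coincide. -/
theorem eq_of_adj_of_dist_add_one {W : Type*} {T : SimpleGraph W} (hT : T.IsTree) {u a x y : W}
    (hx : T.Adj x a) (hy : T.Adj y a) (hdx : T.dist u a = T.dist u x + 1)
    (hdy : T.dist u a = T.dist u y + 1) : x = y := by
  obtain ⟨p, hp⟩ := (hT.1.preconnected u x).exists_walk_length_eq_dist
  obtain ⟨q, hq⟩ := (hT.1.preconnected u y).exists_walk_length_eq_dist
  have hp' : (p.concat hx).IsPath :=
    Walk.isPath_of_length_eq_dist _ (by rw [Walk.length_concat, hp, hdx])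
  have hq' : (q.concat hy).IsPath :=
    Walk.isPath_of_length_eq_dist _ (by rw [Walk.length_concat, hq, hdy])
  have h : p.concat hx = q.concat hy := (hT.existsUnique_path u a).unique hp' hq'
  simpa using congrArg Walk.penultimate h

/-- A sequence with steps `±1` and no local maximum on `1, …, n` descends to some index `m` and
ascends from there on. -/
theorem exists_valley (f : ℕ → ℕ) (n : ℕ)
    (hstep : ∀ k, k ≤ n → f (k + 1) = f k + 1 ∨ f k = f (k + 1) + 1)
    (hmax : ∀ k, k + 1 ≤ n → ¬ (f (k + 1) = f k + 1 ∧ f (k + 1) = f (k + 2) + 1))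
    (hn : 1 ≤ n) :
    ∃ m, 1 ≤ m ∧ m ≤ n ∧ f 1 + 1 = f m + m ∧ f n + m = f m + n := by
  -- The induction needs to know that, once past `m`, the last step went up.
  suffices H : ∀ l, l + 1 ≤ n → ∃ m, 1 ≤ m ∧ m ≤ l + 1 ∧ f 1 + 1 = f m + m ∧
      f (l + 1) + m = f m + (l + 1) ∧ (m < l + 1 → f (l + 1) = f l + 1) by
    obtain ⟨m, h1, h2, h3, h4, -⟩ := H (n - 1) (by omega)
    rw [Nat.sub_add_cancel hn] at h2 h4
    exact ⟨m, h1, h2, h3, h4⟩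
  intro l
  induction l with
  | zero => exact fun _ => ⟨1, by simp⟩
  | succ l ih =>
    intro hl
    obtain ⟨m, h1, h2, h3, h4, h5⟩ := ih (by omega)
    rcases hstep (l + 1) (by omega) with h | h
    · exact ⟨m, h1, by omega, h3, by omega, fun _ => h⟩
    · have hm : m = l + 1 := by
        by_contra hne
        exact hmax l (by omega) ⟨h5 (by omega), h⟩
      subst hm
      exact ⟨l + 1 + 1, by omega, le_rfl, by omega, by omega, by omega⟩

theorem le_add_of_steps (f : ℕ → ℕ) (n : ℕ)
    (hstep : ∀ k, k ≤ n → f (k + 1) = f k + 1 ∨ f k = f (k + 1) + 1) (a d : ℕ)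
    (had : a + d ≤ n) : f a ≤ f (a + d) + d ∧ f (a + d) ≤ f a + d := by
  induction d with
  | zero => simp
  | succ d ih =>
    have h1 := ih (by omega)
    have h2 := hstep (a + d) (by omega)
    rw [← Nat.add_assoc a d 1]
    omega

/-- Let `B` be a binary tree on `V ∪ H` in which consecutive `h`'s are
adjacent (so `h_1, …, h_{n+2}` form a path).  Then for every `v ∈ V`,
`D_B(v, h_2) + D_B(v, h_{n+1}) ≥ n + 1`, with equality iff `v` is adjacent in `B` to some
`h_j` with `2 ≤ j ≤ n+1` (0-indexed `j`: `1 ≤ j ≤ n`). -/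
theorem dist_to_h_ends (n : ℕ) (hn : 1 ≤ n) (B : SimpleGraph (Vtx n))
    (hB : IsBinaryTree B)
    (hpath : ∀ i : Fin (n + 1), B.Adj (Sum.inr i.castSucc) (Sum.inr i.succ))
    (v : Fin n) :
    n + 1 ≤ B.dist (Sum.inl v) (Sum.inr ⟨1, by omega⟩) +
      B.dist (Sum.inl v) (Sum.inr ⟨n, by omega⟩) ∧
    (B.dist (Sum.inl v) (Sum.inr ⟨1, by omega⟩) +
        B.dist (Sum.inl v) (Sum.inr ⟨n, by omega⟩) = n + 1 ↔
      ∃ j : Fin (n + 2), 1 ≤ j.val ∧ j.val ≤ n ∧ B.Adj (Sum.inl v) (Sum.inr j)) := by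
  obtain ⟨hT, -⟩ := hB
  -- The `h`'s as a sequence on `ℕ`; only the indices below `n + 2` matter.
  let h : ℕ → Vtx n := fun k => Sum.inr (Fin.ofNat (n + 2) k)
  have hval : ∀ k (hk : k < n + 2), h k = Sum.inr ⟨k, hk⟩ := fun k hk =>
    congrArg Sum.inr (Fin.ext (Nat.mod_eq_of_lt hk))
  have hadj : ∀ k, k ≤ n → B.Adj (h k) (h (k + 1)) := fun k hk => by
    rw [hval k (by omega), hval (k + 1) (by omega)]
    exact hpath ⟨k, by omega⟩
  rw [← hval 1 (by omega), ← hval n (by omega)]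
  have hstep : ∀ k, k ≤ n → B.dist (Sum.inl v) (h (k + 1)) = B.dist (Sum.inl v) (h k) + 1 ∨
      B.dist (Sum.inl v) (h k) = B.dist (Sum.inl v) (h (k + 1)) + 1 := fun k hk =>
    (hT.dist_eq_dist_add_one_of_adj (Sum.inl v) (hadj k hk)).symm
  have hmax : ∀ k, k + 1 ≤ n →
      ¬ (B.dist (Sum.inl v) (h (k + 1)) = B.dist (Sum.inl v) (h k) + 1 ∧
        B.dist (Sum.inl v) (h (k + 1)) = B.dist (Sum.inl v) (h (k + 2)) + 1) := by
    rintro k hk ⟨h1, h2⟩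
    have he := eq_of_adj_of_dist_add_one hT (hadj k (by omega)) (hadj (k + 1) hk).symm h1 h2
    rw [hval k (by omega), hval (k + 2) (by omega)] at he
    simp at he
  have hpos : ∀ k, 0 < B.dist (Sum.inl v) (h k) := fun k =>
    hT.1.pos_dist_of_ne Sum.inl_ne_inr
  obtain ⟨m, hm1, hmn, e1, e2⟩ :=
    exists_valley (fun k => B.dist (Sum.inl v) (h k)) n hstep hmax hn
  have hm := hpos m
  have hle : n + 1 ≤ B.dist (Sum.inl v) (h 1) + B.dist (Sum.inl v) (h n) := by omega
  refine ⟨hle, fun heq => ?_, ?_⟩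
  · refine ⟨⟨m, by omega⟩, hm1, hmn, ?_⟩
    rw [← hval m (by omega), ← dist_eq_one_iff_adj]
    omega
  · rintro ⟨⟨j, hj⟩, hj1, hjn, hvj⟩
    dsimp only at hj1 hjn
    rw [← hval j hj, ← dist_eq_one_iff_adj] at hvj
    have h1 := (le_add_of_steps (fun k => B.dist (Sum.inl v) (h k)) n hstep 1 (j - 1)
      (by omega)).1
    have h2 := (le_add_of_steps (fun k => B.dist (Sum.inl v) (h k)) n hstep j (n - j)
      (by omega)).2
    rw [Nat.add_sub_cancel' hj1] at h1
    rw [Nat.add_sub_cancel' hjn] at h2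
    omega
end

section
/- Let B be a binary tree on V ∪ H with cost(B) ≤ C. Then Σ_{{u,v} ∈ E} D_B(u, v) ≤ X + 2m. -/
/-!
The cost splits into three parts: the edges of `G` (demand `1`), the pairs `(v, h_2)`,
`(v, h_{n+1})` (demand `d₁`), and the consecutive pairs of `H` (demand `d₂`); see `three_sums_le_cost`.

Each of the `n + 1` consecutive pairs of `H` is at distance at least `1`. If one of them were at
distance at least `2`, the third part alone would be at least `(n + 2) d₂`, which exceeds `C` because
`d₂ = n (n + 1) d₁ + d₁` and `d₁ > X + 2m`. So `h_1, …, h_{n+2}` is a path in the tree `B`. A vertex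
`v` off the path from `h_2` to `h_{n+1}`, which has length `n - 1`, satisfies
`D(v, h_2) + D(v, h_{n+1}) ≥ n + 1` (`add_two_le_dist_add_dist`), so the second and third parts are
at least `n (n + 1) d₁` and `(n + 1) d₂`, which leaves at most `X + 2m` for the first.

When `n = 1`, where `h_2 = h_{n+1}`, the graph `G` has no edges and the sum is empty.
-/

open Finset SimpleGraph

/-- In a tree, the distances from a vertex `v` off a path to the ends of that path add up to at least
the length of the path plus two: the sum is at least the length by the triangle inequality, equality
would put `v` on the path, and the parity of the two is the same since trees are bipartite. -/
lemma add_two_le_dist_add_dist {V : Type*} {B : SimpleGraph V} (hB : B.IsTree)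
    {a b v : V} (r : B.Walk a b) (hr : r.IsPath) (hv : v ∉ r.support) :
    r.length + 2 ≤ B.dist v a + B.dist v b := by
  obtain ⟨p, hp⟩ := hB.connected.exists_walk_length_eq_dist a v
  obtain ⟨q, hq⟩ := hB.connected.exists_walk_length_eq_dist v b
  obtain ⟨s, hs, hsl⟩ := hB.connected.exists_path_of_dist a b
  have hrs : r = s := (hB.existsUnique_path a b).unique hr hs
  have hrd : r.length = B.dist a b := by rw [hrs, hsl]
  have htri : B.dist a b ≤ B.dist a v + B.dist v b := hB.connected.dist_triangle
  have hne : (p.append q).length ≠ B.dist a b := by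
    intro h
    have hpath := Walk.isPath_of_length_eq_dist _ h
    have : r = p.append q := (hB.existsUnique_path a b).unique hr hpath
    apply hv
    rw [this, Walk.mem_support_append_iff]
    exact Or.inl p.end_mem_support
  obtain ⟨c⟩ : B.Colorable 2 := hB.isAcyclic.isBipartite
  have e : B.Coloring Bool := B.recolorOfEquiv finTwoEquiv c
  have h1 := e.even_length_iff_congr r
  have h2 := e.even_length_iff_congr (p.append q)
  have hpar : Even r.length ↔ Even (p.append q).length := h1.trans h2.symm
  rw [Walk.length_append] at hne hpar
  rw [B.dist_comm (u := v) (v := a), ← hp, ← hq]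
  rw [← hp, ← hq, ← hrd] at htri
  rw [← hrd] at hne
  rw [Nat.even_iff, Nat.even_iff] at hpar
  omega

/-- If consecutive elements of `H` are adjacent, then they form a path; here, its part from index `1`
to index `1 + k` (0-indexed), which stays inside `H`. -/
lemma exists_backbone {n : ℕ} {B : SimpleGraph (Vtx n)} (hn : 1 ≤ n)
    (hadj : ∀ i : Fin (n + 1), B.Adj (Sum.inr i.castSucc) (Sum.inr i.succ)) (k : ℕ)
    (hk : 1 + k < n + 2) :
    ∃ r : B.Walk (Sum.inr ⟨1, by omega⟩) (Sum.inr ⟨1 + k, hk⟩), r.IsPath ∧ r.length = k ∧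
      ∀ x ∈ r.support, ∃ j : Fin (n + 2), x = Sum.inr j ∧ j.val ≤ 1 + k := by
  induction k with
  | zero => exact ⟨Walk.nil, by simp, by simp, by simp⟩
  | succ k ih =>
    obtain ⟨r, hr, hl, hs⟩ := ih (by omega)
    have ha : B.Adj (Sum.inr ⟨1 + k, by omega⟩) (Sum.inr ⟨1 + (k + 1), hk⟩) :=
      hadj ⟨1 + k, by omega⟩
    refine ⟨r.concat ha, hr.concat ?_ ha, by rw [Walk.length_concat, hl], ?_⟩
    · intro hmem
      obtain ⟨j, hj, hj'⟩ := hs _ hmem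
      obtain rfl := Sum.inr_injective hj
      simp at hj'
    · intro x hx
      rw [Walk.support_concat, List.mem_append, List.mem_singleton] at hx
      rcases hx with hx | rfl
      · obtain ⟨j, hj, hj'⟩ := hs _ hx
        exact ⟨j, hj, by omega⟩
      · exact ⟨_, rfl, le_rfl⟩

/-- The pairs of positive demand, indexed without repetition (when `2 ≤ n`): edges of `G`, pairs of a
vertex `v` with `h_2` (`false`) or `h_{n+1}` (`true`), and consecutive pairs of `H`. -/
def demandPair (n : ℕ) (hn : 1 ≤ n) (G : SimpleGraph (Fin n)) [DecidableRel G.Adj] :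
    G.edgeFinset ⊕ ((Fin n × Bool) ⊕ Fin (n + 1)) → Sym2 (Vtx n)
  | Sum.inl e => Sym2.map Sum.inl e.1
  | Sum.inr (Sum.inl (v, false)) => s(Sum.inl v, Sum.inr ⟨1, by omega⟩)
  | Sum.inr (Sum.inl (v, true)) => s(Sum.inl v, Sum.inr ⟨n, by omega⟩)
  | Sum.inr (Sum.inr i) => s(Sum.inr i.castSucc, Sum.inr i.succ)

lemma demandPair_injective (n : ℕ) (hn : 2 ≤ n) (G : SimpleGraph (Fin n)) [DecidableRel G.Adj] :
    Function.Injective (demandPair n (by omega) G) := by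
  rintro (⟨e, he⟩ | ⟨v, _ | _⟩ | i) (⟨e', he'⟩ | ⟨v', _ | _⟩ | i') h
  · have : e = e' := Sym2.map.injective Sum.inl_injective h
    subst this
    rfl
  all_goals try induction e
  all_goals try induction e'
  all_goals simp only [demandPair, Sym2.map_mk, Sym2.eq_iff, Sum.inl.injEq, Sum.inr.injEq,
    reduceCtorEq, Fin.ext_iff, Fin.val_castSucc, Fin.val_succ, and_false, false_and, or_false,
    and_true, Prod.mk.injEq] at h ⊢
  all_goals omega

/-- The demand-weighted distances over the three families of pairs are part of the cost. -/
lemma three_sums_le_cost (n m X : ℕ) (hn : 2 ≤ n) (G : SimpleGraph (Fin n))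
    [DecidableRel G.Adj] (B : SimpleGraph (Vtx n)) :
    (∑ e ∈ G.edgeFinset,
      Sym2.lift ⟨fun a b => B.dist (Sum.inl a) (Sum.inl b),
        fun a b => by simp only []; rw [B.dist_comm]⟩ e)
    + (X + 2 * m + 1) * (∑ v : Fin n, (B.dist (Sum.inl v) (Sum.inr ⟨1, by omega⟩)
        + B.dist (Sum.inl v) (Sum.inr ⟨n, by omega⟩)))
    + (n ^ 2 + n + 1) * (X + 2 * m + 1) *
        (∑ i : Fin (n + 1), B.dist (Sum.inr i.castSucc) (Sum.inr i.succ))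
    ≤ cost n m X G B := by
  classical
  unfold cost
  set F : Sym2 (Vtx n) → ℕ := Sym2.lift ⟨fun x y => demand n m X G x y * B.dist x y,
      fun x y => by simp only []; rw [demand_symm, B.dist_comm]⟩ with hF
  have h1 : ∑ i, F (demandPair n (by omega) G i) ≤ ∑ p ∈ (univ : Finset (Vtx n)).sym2, F p := by
    rw [← Finset.sum_image (f := F) (g := demandPair n (by omega) G)
      (fun x _ y _ h => demandPair_injective n hn G h)]
    exact Finset.sum_le_sum_of_subset (by simp)
  refine le_trans (le_of_eq ?_) h1
  rw [Fintype.sum_sum_type, Fintype.sum_sum_type, Fintype.sum_prod_type, add_assoc]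
  congr 1
  · rw [← Finset.sum_coe_sort]
    refine Finset.sum_congr rfl ?_
    rintro ⟨e, he⟩ -
    induction e with
    | _ a b =>
      have : G.Adj a b := by simpa using he
      simp [demandPair, hF, demand, this]
  · rw [Finset.mul_sum, Finset.mul_sum]
    congr 1
    · refine Finset.sum_congr rfl fun v _ => ?_
      simp [demandPair, hF, demand]
      ring
    · refine Finset.sum_congr rfl fun v _ => ?_
      simp [demandPair, hF, demand]

/-- Let `B` be a binary tree on `V ∪ H` with `cost(B) ≤ C`.  Then
`Σ_{{u,v} ∈ E} D_B(u, v) ≤ X + 2m`. -/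
theorem edge_dist_sum_le (n m X : ℕ) (hn : 1 ≤ n) (G : SimpleGraph (Fin n))
    [DecidableRel G.Adj] (hm : G.edgeFinset.card = m)
    (B : SimpleGraph (Vtx n)) (hB : IsBinaryTree B)
    (hc : cost n m X G B ≤ Cbound n m X) :
    (∑ e ∈ G.edgeFinset,
      Sym2.lift ⟨fun a b => B.dist (Sum.inl a) (Sum.inl b),
        fun a b => by simp only []; rw [B.dist_comm]⟩ e) ≤ X + 2 * m := by
  obtain ⟨hT, -⟩ := hB
  rcases hn.eq_or_lt with rfl | hn2
  · have : G.edgeFinset = ∅ := by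
      ext e
      induction e with
      | _ a b => simp [Subsingleton.elim a b]
    rw [this]
    simp
  have key := (three_sums_le_cost n m X hn2 G B).trans hc
  unfold Cbound at key
  generalize (∑ e ∈ G.edgeFinset,
      Sym2.lift ⟨fun a b => B.dist (Sum.inl a) (Sum.inl b),
        fun a b => by simp only []; rw [B.dist_comm]⟩ e) = S at key ⊢
  have hpos : ∀ i : Fin (n + 1), 1 ≤ B.dist (Sum.inr i.castSucc) (Sum.inr i.succ) := by
    intro i
    refine hT.connected.pos_dist_of_ne fun h => ?_
    have := Sum.inr_injective h
    simp [Fin.ext_iff] at this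
  have hge : n + 1 ≤ ∑ i : Fin (n + 1), B.dist (Sum.inr i.castSucc) (Sum.inr i.succ) := by
    simpa using Finset.sum_le_sum (s := univ) fun i _ => hpos i
  have hadj : ∀ i : Fin (n + 1), B.Adj (Sum.inr i.castSucc) (Sum.inr i.succ) := by
    by_contra! hcon
    obtain ⟨i, hi⟩ := hcon
    have hi1 : 1 < B.dist (Sum.inr i.castSucc) (Sum.inr i.succ) :=
      lt_of_le_of_ne (hpos i) fun h => hi (SimpleGraph.dist_eq_one_iff_adj.mp h.symm)
    have hlt : n + 2 ≤ ∑ i : Fin (n + 1), B.dist (Sum.inr i.castSucc) (Sum.inr i.succ) := by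
      have := Finset.sum_lt_sum (s := univ) (fun i _ => hpos i) ⟨i, mem_univ i, hi1⟩
      simp only [sum_const, card_univ, Fintype.card_fin, smul_eq_mul, mul_one] at this
      omega
    have := Nat.mul_le_mul_left ((n ^ 2 + n + 1) * (X + 2 * m + 1)) hlt
    refine absurd (((Nat.le_add_left _ _).trans key).trans_lt ?_) this.not_gt
    calc (n + 1) * ((n ^ 2 + n + 1) * (X + 2 * m + 1)) + n * (n + 1) * (X + 2 * m + 1) + X + 2 * m
        < (n + 1) * ((n ^ 2 + n + 1) * (X + 2 * m + 1)) + n * (n + 1) * (X + 2 * m + 1)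
          + (X + 2 * m + 1) := by omega
      _ = (n ^ 2 + n + 1) * (X + 2 * m + 1) * (n + 2) := by ring
  have hV : n * (n + 1) ≤ ∑ v : Fin n, (B.dist (Sum.inl v) (Sum.inr ⟨1, by omega⟩)
        + B.dist (Sum.inl v) (Sum.inr ⟨n, by omega⟩)) := by
    obtain ⟨k, rfl⟩ : ∃ k, n = 1 + k := ⟨n - 1, by omega⟩
    obtain ⟨r, hr, hl, hs⟩ := exists_backbone hn hadj k (by omega)
    have : ∀ v : Fin (1 + k), 1 + k + 1 ≤ B.dist (Sum.inl v) (Sum.inr ⟨1, by omega⟩)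
        + B.dist (Sum.inl v) (Sum.inr ⟨1 + k, by omega⟩) := by
      intro v
      have hv : Sum.inl v ∉ r.support := fun h => by
        obtain ⟨j, hj, -⟩ := hs _ h
        cases hj
      have := add_two_le_dist_add_dist hT r hr hv
      omega
    simpa using Finset.sum_le_sum (s := univ) fun i _ => this i
  have h1 := Nat.mul_le_mul_left (X + 2 * m + 1) hV
  have h2 := Nat.mul_le_mul_left ((n ^ 2 + n + 1) * (X + 2 * m + 1)) hge
  have h3 : (n + 1) * ((n ^ 2 + n + 1) * (X + 2 * m + 1)) + n * (n + 1) * (X + 2 * m + 1)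
      = (X + 2 * m + 1) * (n * (n + 1)) + (n ^ 2 + n + 1) * (X + 2 * m + 1) * (n + 1) := by ring
  linarith
end

section
/- Fix integers n ≥ 2 and 2 ≤ u ≤ n. The number of permutations π of {1, …, n} that are not the lexicographically last permutation and whose immediate lexicographic successor σ agrees with π in positions 1, …, n−u and differs from π in position n−u+1, equals (u − 1)·binom(n, u)·(n − u)!. Equivalently, this is the number of permutations π whose length-u suffix (π(n−u+1), π(n−u+2), …, π(n)) satisfies π(n−u+2) > π(n−u+3) > … > π(n) and π(n−u+1) < π(n−u+2). -/
/-!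
The two sets of permutations coincide, and the second is counted as a difference.

Put `k = n - u`. If `π` is decreasing on the positions after `k`, no permutation that first differs
from `π` after position `k` can be lexicographically greater than `π`. If moreover
`π k < π (k + 1)`, exchanging these two values gives a greater permutation that first differs at
`k`, so the successor first differs from `π` at exactly `k` (`exists_lexSucc_of_suffix`).
Conversely, an ascent located after `k` would yield, by a transposition, a permutation strictly
between `π` and its successor (`suffix_of_lexSucc`).

For the count, let `D k` be the set of permutations that are decreasing on the positions `≥ k`.
Such a permutation is determined by its first `k` values, which are arbitrary distinct values, so
`|D k| = n (n - 1) ⋯ (n - k + 1)` (`ncard_decFrom`). The set to be counted is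
`D (k + 1) \ D k`, and `n! / (u - 1)! - n! / u! = (u - 1) * n! / u!`.
-/

open Finset

/-- Strict lexicographic order on sequences `(f 0, …, f (n-1))`. -/
def LexLt {n : ℕ} (f g : Fin n → Fin n) : Prop :=
  ∃ i : Fin n, (∀ j : Fin n, j < i → f j = g j) ∧ f i < g i

/-- `σ` is the immediate lexicographic successor of `π`: it is lexicographically greater
than `π`, and it is `≤` every permutation that is lexicographically greater than `π`. -/
def IsLexSucc {n : ℕ} (π σ : Equiv.Perm (Fin n)) : Prop :=
  LexLt ⇑π ⇑σ ∧ ∀ τ : Equiv.Perm (Fin n), LexLt ⇑π ⇑τ → σ = τ ∨ LexLt ⇑σ ⇑τ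

theorem lexLt_iff_toLex {n : ℕ} (f g : Fin n → Fin n) : LexLt f g ↔ toLex f < toLex g := Iff.rfl

/-- The permutations whose values decrease strictly along the (0-indexed) positions `≥ k`. -/
def decFrom (n k : ℕ) : Set (Equiv.Perm (Fin n)) :=
  {π | ∀ i j : Fin n, k ≤ i.val → i < j → π j < π i}

/-! ### The successor and the decreasing suffix -/

/-- Transposing the values at an ascent `i < j` gives a lexicographically greater permutation. -/
theorem lexLt_mul_swap {n : ℕ} (π : Equiv.Perm (Fin n)) {i j : Fin n} (hij : i < j)
    (h : π i < π j) : LexLt ⇑π ⇑(π * Equiv.swap i j) := by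
  refine ⟨i, fun l hl => ?_, by simpa using h⟩
  rw [Equiv.Perm.mul_apply, Equiv.swap_apply_of_ne_of_ne hl.ne (hl.trans hij).ne]

/-- Where `σ` first exceeds `π`, its value there occurs in `π` at a later position. -/
theorem exists_later_of_agree {n : ℕ} (π σ : Equiv.Perm (Fin n)) (i : Fin n)
    (h : ∀ j < i, π j = σ j) (hi : π i < σ i) : ∃ j, i < j ∧ π j = σ i := by
  obtain ⟨j, hj⟩ := π.surjective (σ i)
  refine ⟨j, ?_, hj⟩
  rcases lt_trichotomy j i with hlt | rfl | hgt
  · exact absurd (σ.injective ((h j hlt).symm.trans hj)) hlt.ne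
  · exact absurd hj hi.ne
  · exact hgt

/-- A permutation that agrees with `π` up to and including the position where the successor `σ`
first differs from `π` is not greater than `π`, as it is below `σ`. -/
theorem not_lexLt_of_agree {n : ℕ} {π σ τ : Equiv.Perm (Fin n)} (hs : IsLexSucc π σ) (i : Fin n)
    (h : ∀ j < i, π j = σ j) (hi : π i < σ i) (hτ : ∀ j ≤ i, τ j = π j) : ¬ LexLt ⇑π ⇑τ := by
  intro hlt
  have hτσ : toLex ⇑τ < toLex ⇑σ :=
    (lexLt_iff_toLex _ _).1 ⟨i, fun j hj => (hτ j hj.le).trans (h j hj), by rwa [hτ i le_rfl]⟩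
  rcases hs.2 τ hlt with rfl | hστ
  · exact lt_irrefl _ hτσ
  · exact lt_asymm hτσ ((lexLt_iff_toLex _ _).1 hστ)

theorem exists_isLexSucc {n : ℕ} {π τ : Equiv.Perm (Fin n)} (h : LexLt ⇑π ⇑τ) :
    ∃ σ, IsLexSucc π σ := by
  obtain ⟨σ, hσ, hmin⟩ := Set.exists_min_image {ρ : Equiv.Perm (Fin n) | LexLt ⇑π ⇑ρ}
    (fun ρ => toLex (⇑ρ : Fin n → Fin n)) (Set.toFinite _) ⟨τ, h⟩
  refine ⟨σ, hσ, fun ρ hρ => ?_⟩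
  rcases (hmin ρ hρ).eq_or_lt with he | hl
  · exact Or.inl (DFunLike.coe_injective (toLex.injective he))
  · exact Or.inr hl

theorem exists_lexSucc_of_suffix {n : ℕ} (π : Equiv.Perm (Fin n)) (k l : Fin n)
    (hl : l.val = k.val + 1) (hdec : π ∈ decFrom n (k.val + 1)) (hasc : π k < π l) :
    ∃ σ, IsLexSucc π σ ∧ (∀ i < k, π i = σ i) ∧ π k ≠ σ k := by
  have hkl : k < l := by rw [Fin.lt_def]; omega
  have hswap := lexLt_mul_swap π hkl hasc
  obtain ⟨σ, hσ⟩ := exists_isLexSucc hswap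
  obtain ⟨i, hagree, hi⟩ := hσ.1
  have hik : i = k := by
    rcases lt_trichotomy i k with hlt | he | hgt
    · refine absurd hswap (not_lexLt_of_agree hσ i hagree hi fun j hj => ?_)
      have hjk : j < k := hj.trans_lt hlt
      rw [Equiv.Perm.mul_apply, Equiv.swap_apply_of_ne_of_ne hjk.ne (hjk.trans hkl).ne]
    · exact he
    · obtain ⟨j, hij, hj⟩ := exists_later_of_agree π σ i hagree hi
      exact absurd (hdec i j hgt hij) (by rw [hj]; exact hi.not_gt)
  subst hik
  exact ⟨σ, hσ, hagree, hi.ne⟩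

theorem suffix_of_lexSucc {n : ℕ} (π σ : Equiv.Perm (Fin n)) (k l : Fin n)
    (hl : l.val = k.val + 1) (hσ : IsLexSucc π σ) (hagree : ∀ i < k, π i = σ i)
    (hne : π k ≠ σ k) : π ∈ decFrom n (k.val + 1) ∧ π k < π l := by
  have hk : π k < σ k := by
    obtain ⟨i, hagree', hi⟩ := hσ.1
    rcases lt_trichotomy i k with hlt | rfl | hgt
    · exact absurd (hagree i hlt) hi.ne
    · exact hi
    · exact absurd (hagree' k hgt) hne
  have hdec : π ∈ decFrom n (k.val + 1) := by
    intro i j hki hij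
    by_contra hcon
    have hasc : π i < π j := lt_of_le_of_ne (not_lt.1 hcon) (π.injective.ne hij.ne)
    refine not_lexLt_of_agree hσ k hagree hk (fun p hp => ?_) (lexLt_mul_swap π hij hasc)
    have hpi : p < i := by rw [Fin.lt_def]; rw [Fin.le_def] at hp; omega
    rw [Equiv.Perm.mul_apply, Equiv.swap_apply_of_ne_of_ne hpi.ne (hpi.trans hij).ne]
  refine ⟨hdec, ?_⟩
  obtain ⟨j, hkj, hj⟩ := exists_later_of_agree π σ k hagree hk
  have hlj : l ≤ j := by rw [Fin.le_def]; rw [Fin.lt_def] at hkj; omega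
  rcases hlj.eq_or_lt with rfl | hlt
  · rwa [hj]
  · exact (hj ▸ hk).trans (hdec l j hl.ge hlt)

/-! ### Counting -/

/-- The values left over by an injective word of length `k`. -/
def unused {k m : ℕ} (f : Fin k ↪ Fin (k + m)) : Finset (Fin (k + m)) := (univ.map f)ᶜ

theorem card_unused {k m : ℕ} (f : Fin k ↪ Fin (k + m)) : (unused f).card = m := by
  simp [unused, card_compl]

theorem mem_unused {k m : ℕ} (f : Fin k ↪ Fin (k + m)) (x : Fin (k + m)) :
    x ∈ unused f ↔ ∀ i, f i ≠ x := by
  simp [unused]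

/-- The word of the first `k` values of a permutation. -/
def initialWord {k m : ℕ} (π : Equiv.Perm (Fin (k + m))) : Fin k ↪ Fin (k + m) :=
  (Fin.castAddEmb m).trans π.toEmbedding

theorem initialWord_apply {k m : ℕ} (π : Equiv.Perm (Fin (k + m))) (i : Fin k) :
    initialWord π i = π (Fin.castAdd m i) := rfl

/-- Read backwards, the suffix of an element of `decFrom` is the increasing enumeration of the
values not used by its initial word. -/
theorem suffix_eq_orderEmb {k m : ℕ} {π : Equiv.Perm (Fin (k + m))} (h : π ∈ decFrom (k + m) k)
    (j : Fin m) : π (Fin.natAdd k j) =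
      (unused (initialWord π)).orderEmbOfFin (card_unused _) j.rev := by
  have := Finset.orderEmbOfFin_unique (card_unused (initialWord π))
    (f := fun j : Fin m => π (Fin.natAdd k j.rev)) (fun x => ?_) (fun a b hab => ?_)
  · rw [← this]
    simp only [Fin.rev_rev]
  · refine (mem_unused _ _).2 fun i hi => ?_
    have := congrArg Fin.val (π.injective hi)
    simp at this
    omega
  · refine h _ _ (by simp) ?_
    rw [Fin.lt_def] at hab ⊢
    simp
    omega

theorem bijOn_initialWord (k m : ℕ) :
    Set.BijOn (initialWord (k := k) (m := m)) (decFrom (k + m) k) Set.univ := by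
  refine ⟨fun _ _ => Set.mem_univ _, fun π hπ ρ hρ he => ?_, fun f _ => ?_⟩
  · ext1 x
    refine Fin.addCases (fun i => ?_) (fun j => ?_) x
    · exact DFunLike.congr_fun he i
    · rw [suffix_eq_orderEmb hπ, suffix_eq_orderEmb hρ]
      simp only [he]
  · let e := (unused f).orderEmbOfFin (card_unused f)
    let p : Fin (k + m) → Fin (k + m) := Fin.addCases f (fun j => e j.rev)
    have hpl (i : Fin k) : p (Fin.castAdd m i) = f i := by simp [p]
    have hpr (j : Fin m) : p (Fin.natAdd k j) = e j.rev := by simp [p]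
    have hfe (i : Fin k) (j : Fin m) : f i ≠ e j :=
      (mem_unused f _).1 (Finset.orderEmbOfFin_mem _ _ j) i
    have hp : Function.Injective p := by
      intro x y
      refine Fin.addCases (fun i => ?_) (fun i => ?_) x <;>
        refine Fin.addCases (fun j => ?_) (fun j => ?_) y <;>
        simp only [hpl, hpr] <;> intro hxy
      · rw [f.injective hxy]
      · exact absurd hxy (hfe _ _)
      · exact absurd hxy.symm (hfe _ _)
      · rw [Fin.rev_injective (e.injective hxy)]
    refine ⟨Equiv.ofBijective p (Finite.injective_iff_bijective.1 hp), ?_, ?_⟩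
    · intro x y hx hxy
      obtain ⟨i, rfl⟩ : ∃ i, x = Fin.natAdd k i :=
        ⟨⟨x - k, by omega⟩, Fin.ext (by simp; omega)⟩
      obtain ⟨j, rfl⟩ : ∃ j, y = Fin.natAdd k j :=
        ⟨⟨y - k, by omega⟩, Fin.ext (by rw [Fin.lt_def] at hxy; simp at hxy ⊢; omega)⟩
      simp only [Equiv.ofBijective_apply, hpr]
      refine e.strictMono (Fin.rev_lt_rev.2 ?_)
      rw [Fin.lt_def] at hxy ⊢
      simpa using hxy
    · ext1 i
      exact hpl i

theorem ncard_decFrom {n k : ℕ} (hk : k ≤ n) : (decFrom n k).ncard = n.descFactorial k := by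
  obtain ⟨m, rfl⟩ := Nat.exists_eq_add_of_le hk
  have hbij := bijOn_initialWord k m
  rw [← hbij.injOn.ncard_image, hbij.image_eq, Set.ncard_univ, Nat.card_eq_fintype_card,
    Fintype.card_embedding_eq]
  simp

theorem decFrom_sdiff {n : ℕ} (k l : Fin n) (hl : l.val = k.val + 1) :
    {π | π ∈ decFrom n (k.val + 1) ∧ π k < π l} = decFrom n (k.val + 1) \ decFrom n k := by
  have hkl : k < l := by rw [Fin.lt_def]; omega
  ext π
  refine and_congr_right fun hdec => ⟨fun h hk => lt_asymm h (hk k l le_rfl hkl), fun h => ?_⟩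
  by_contra hcon
  have hlk : π l < π k := lt_of_le_of_ne (not_lt.1 hcon) (π.injective.ne hkl.ne')
  refine h fun i j hi hij => ?_
  rcases hi.eq_or_lt with he | hlt
  · obtain rfl : k = i := Fin.ext he
    have hlj : l ≤ j := by rw [Fin.le_def]; rw [Fin.lt_def] at hij; omega
    rcases hlj.eq_or_lt with rfl | hlt
    · exact hlk
    · exact (hdec l j hl.ge hlt).trans hlk
  · exact hdec i j hlt hij

theorem descFactorial_sub (n u : ℕ) (hu : 2 ≤ u) (hun : u ≤ n) :
    n.descFactorial (n - u + 1) - n.descFactorial (n - u) =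
      (u - 1) * n.choose u * (n - u).factorial := by
  rw [Nat.descFactorial_succ, show n - (n - u) = u by omega, ← Nat.sub_one_mul,
    Nat.descFactorial_eq_factorial_mul_choose, Nat.choose_symm hun]
  ring

/-- Fix `2 ≤ u ≤ n`.  The number of permutations `π` of `{1, …, n}`
that are not lexicographically last and whose immediate lexicographic successor agrees
with `π` in positions `1, …, n−u` and differs in position `n−u+1` (0-indexed: agrees at
indices `< n−u`, differs at index `n−u`) equals `(u−1)·binom(n,u)·(n−u)!`.  Equivalently,
this is the number of permutations whose length-`u` suffix satisfies
`π(n−u+2) > π(n−u+3) > ⋯ > π(n)` and `π(n−u+1) < π(n−u+2)` (0-indexed: `π` is strictly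
decreasing on indices `≥ n−u+1`, and `π(n−u) < π(n−u+1)`). -/
theorem count_succ_suffix (n u : ℕ) (hn : 2 ≤ n) (hu2 : 2 ≤ u) (hun : u ≤ n) :
    {π : Equiv.Perm (Fin n) | ∃ σ : Equiv.Perm (Fin n), IsLexSucc π σ ∧
        (∀ i : Fin n, i.val < n - u → π i = σ i) ∧
        π ⟨n - u, by omega⟩ ≠ σ ⟨n - u, by omega⟩}.ncard =
      (u - 1) * Nat.choose n u * Nat.factorial (n - u) ∧
    {π : Equiv.Perm (Fin n) | (∀ i j : Fin n, n - u + 1 ≤ i.val → i < j → π j < π i) ∧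
        π ⟨n - u, by omega⟩ < π ⟨n - u + 1, by omega⟩}.ncard =
      (u - 1) * Nat.choose n u * Nat.factorial (n - u) := by
  have hset : {π : Equiv.Perm (Fin n) | ∃ σ : Equiv.Perm (Fin n), IsLexSucc π σ ∧
        (∀ i : Fin n, i.val < n - u → π i = σ i) ∧
        π ⟨n - u, by omega⟩ ≠ σ ⟨n - u, by omega⟩} =
      {π : Equiv.Perm (Fin n) | (∀ i j : Fin n, n - u + 1 ≤ i.val → i < j → π j < π i) ∧
        π ⟨n - u, by omega⟩ < π ⟨n - u + 1, by omega⟩} := by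
    ext π
    constructor
    · rintro ⟨σ, hσ, hagree, hne⟩
      exact suffix_of_lexSucc π σ ⟨n - u, by omega⟩ ⟨n - u + 1, by omega⟩ rfl hσ hagree hne
    · rintro ⟨hdec, hasc⟩
      exact exists_lexSucc_of_suffix π ⟨n - u, by omega⟩ ⟨n - u + 1, by omega⟩ rfl hdec hasc
  rw [hset, and_self]
  have hsub : decFrom n (n - u) ⊆ decFrom n (n - u + 1) :=
    fun π hπ i j hi hij => hπ i j (by omega) hij
  have hdiff := decFrom_sdiff (n := n) ⟨n - u, by omega⟩ ⟨n - u + 1, by omega⟩ rfl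
  refine (congrArg Set.ncard hdiff).trans ?_
  rw [Set.ncard_sdiff hsub, ncard_decFrom (by omega), ncard_decFrom (by omega),
    descFactorial_sub n u hu2 hun]
end

section
/- For every integer n ≥ 2, Σ_{u=2}^{n} u·(u−1)·binom(n, u)·(n−u)! = Σ_{u=2}^{n} n!/(u−2)!, and this quantity is strictly less than e·n!. Consequently, the average length of the changed suffix between consecutive permutations of {1, …, n} in lexicographic order is less than e. -/
/-!
Since `binom(n,u)·u!·(n−u)! = n!` and `u! = u·(u−1)·(u−2)!`, each term
`u·(u−1)·binom(n,u)·(n−u)!` equals `n!/(u−2)!`. Hence the sum `S` is `n!` times the partial sum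
`Σ_{k ≤ n−2} 1/k!` of the series of `e`. The next two terms of that series, multiplied by `n!`,
contribute `n + 1`, so `S + (n + 1) ≤ e·n!` (`suffix_sum_add_le`). As `n + 1 ≥ 3 > e`, this gives
`S < e·(n! − 1)`, which implies both inequalities.
-/

open Finset

lemma suffix_term_mul (n u : ℕ) (h2 : 2 ≤ u) (hu : u ≤ n) :
    u * (u - 1) * Nat.choose n u * Nat.factorial (n - u) * Nat.factorial (u - 2) =
      Nat.factorial n := by
  obtain ⟨k, rfl⟩ := Nat.exists_eq_add_of_le' h2
  rw [← Nat.choose_mul_factorial_mul_factorial hu]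
  simp only [Nat.add_sub_cancel, Nat.factorial_succ, show k + 2 - 1 = k + 1 by omega]
  ring

lemma suffix_term_eq_div (n u : ℕ) (h2 : 2 ≤ u) (hu : u ≤ n) :
    u * (u - 1) * Nat.choose n u * Nat.factorial (n - u) =
      Nat.factorial n / Nat.factorial (u - 2) :=
  (Nat.div_eq_of_eq_mul_left (Nat.factorial_pos _) (suffix_term_mul n u h2 hu).symm).symm

/-- The quantitative form of `S < e·n!`: the slack `n + 1` is `n!·(1/(n−1)! + 1/n!)`. -/
lemma suffix_sum_add_le (n : ℕ) (hn : 2 ≤ n) :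
    ((∑ u ∈ Finset.Icc 2 n, u * (u - 1) * Nat.choose n u * Nat.factorial (n - u) : ℕ) : ℝ) +
      (n + 1) ≤ Real.exp 1 * Nat.factorial n := by
  have hS : ((∑ u ∈ Finset.Icc 2 n,
      u * (u - 1) * Nat.choose n u * Nat.factorial (n - u) : ℕ) : ℝ) =
      (∑ k ∈ Finset.range (n - 1), (1 : ℝ) / Nat.factorial k) * Nat.factorial n := by
    rw [← Finset.Ico_add_one_right_eq_Icc, Finset.sum_Ico_eq_sum_range, Nat.cast_sum,
      Finset.sum_mul, show n + 1 - 2 = n - 1 by omega]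
    refine Finset.sum_congr rfl fun k hk => ?_
    have hk' : 2 + k ≤ n := by
      have := Finset.mem_range.mp hk
      omega
    have hmul := suffix_term_mul n (2 + k) (by omega) hk'
    rw [Nat.add_sub_cancel_left] at hmul
    have hpos : (Nat.factorial k : ℝ) ≠ 0 := by exact_mod_cast Nat.factorial_ne_zero k
    rw [one_div_mul_eq_div, eq_div_iff hpos]
    exact_mod_cast hmul
  rw [hS]
  obtain ⟨m, rfl⟩ := Nat.exists_eq_add_of_le' hn
  have hexp := Real.sum_le_exp_of_nonneg (x := 1) zero_le_one (m + 3)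
  simp only [one_pow] at hexp
  rw [Finset.sum_range_succ, Finset.sum_range_succ] at hexp
  have hpos : (0 : ℝ) < Nat.factorial (m + 2) := by exact_mod_cast Nat.factorial_pos _
  have hpos' : (0 : ℝ) < Nat.factorial (m + 1) := by exact_mod_cast Nat.factorial_pos _
  have hslack : ((1 : ℝ) / Nat.factorial (m + 1) + 1 / Nat.factorial (m + 2)) *
      Nat.factorial (m + 2) = ((m + 2 : ℕ) : ℝ) + 1 := by
    rw [add_mul, one_div_mul_cancel hpos.ne', Nat.factorial_succ (m + 1)]
    push_cast
    field_simp
    ring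
  rw [← hslack, show m + 2 - 1 = m + 1 by omega, ← add_mul, ← add_assoc]
  exact mul_le_mul_of_nonneg_right hexp hpos.le

/-- For every `n ≥ 2`,
`Σ_{u=2}^{n} u·(u−1)·binom(n,u)·(n−u)! = Σ_{u=2}^{n} n!/(u−2)!` (the division is exact),
this quantity is strictly less than `e·n!`, and consequently the average length of the
changed suffix between consecutive permutations in lexicographic order — the above sum
(total suffix length over all `n! − 1` consecutive pairs) divided by `n! − 1` — is less
than `e`. -/
theorem suffix_length_sum (n : ℕ) (hn : 2 ≤ n) :
    (∑ u ∈ Finset.Icc 2 n, u * (u - 1) * Nat.choose n u * Nat.factorial (n - u)) =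
      (∑ u ∈ Finset.Icc 2 n, Nat.factorial n / Nat.factorial (u - 2)) ∧
    ((∑ u ∈ Finset.Icc 2 n, u * (u - 1) * Nat.choose n u * Nat.factorial (n - u) : ℕ) : ℝ) <
      Real.exp 1 * Nat.factorial n ∧
    ((∑ u ∈ Finset.Icc 2 n, u * (u - 1) * Nat.choose n u * Nat.factorial (n - u) : ℕ) : ℝ) /
      ((Nat.factorial n : ℝ) - 1) < Real.exp 1 := by
  have hle := suffix_sum_add_le n hn
  have hn' : (2 : ℝ) ≤ n := by exact_mod_cast hn
  refine ⟨?_, by linarith, ?_⟩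
  · refine Finset.sum_congr rfl fun u hu => ?_
    obtain ⟨h2, hu⟩ := Finset.mem_Icc.mp hu
    exact suffix_term_eq_div n u h2 hu
  · have hfac : (2 : ℝ) ≤ Nat.factorial n := by
      exact_mod_cast hn.trans (Nat.self_le_factorial n)
    rw [div_lt_iff₀ (by linarith)]
    -- The slack `n + 1 ≥ 3 > e` absorbs the `−1` in the denominator `n! − 1`.
    have he : Real.exp 1 < 3 := Real.exp_one_lt_three
    linarith
end

section
/- Let T be a finite tree on vertex set S, let {u, v} be an edge of T, and let U and V' be the vertex sets of the components of T − {u, v} containing u and v respectively. Let T' be the tree on S obtained by relabeling T via the transposition σ = (u v), i.e., {x, y} is an edge of T' if and only if {σ(x), σ(y)} is an edge of T (the 'edge switch' of {u, v}). Then for any symmetric demand function W: S × S → ℝ≥0 with cost(T) = Σ_{{x,y}} W(x, y)·D_T(x, y) over unordered pairs, cost(T') − cost(T) = Σ_{i ∈ U, i ≠ u} (W(i, u) − W(i, v)) + Σ_{j ∈ V', j ≠ v} (W(j, v) − W(j, u)). In particular, all distances between pairs of vertices other than those involving u or v are unchanged. -/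
/-!
The relabeling `σ = (u v)` is an isomorphism from `T'` to `T`, so `D_{T'}(x, y) = D_T(σ x, σ y)`
(`dist_relabel`). Hence distances between vertices outside `{u, v}` do not change, the distance
from `u` to `v` does not change, and for `x ∉ {u, v}` the distances from `x` to `u` and from `x`
to `v` are interchanged.

In a tree the distances from `x` to the ends of an edge `{u, v}` differ by exactly one, and `x`
lies on the side of the nearer end: a geodesic from `x` to that end avoids the other end, hence
survives the deletion of `{u, v}`, while the two ends are separated by that deletion
(`reachable_deleteEdges_iff`). So the change of distance is `+1` or `-1` according to the
component of `x`. Writing the cost as half of a sum over ordered pairs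
(`sum_sum_eq_two_mul_treeCost`) turns this into the stated formula.
-/


open Finset SimpleGraph

open scoped Classical

/-- The cost of a tree `T` with respect to a symmetric demand `W`: the sum over unordered
pairs `{x, y}` of `W(x,y) · D_T(x,y)` (diagonal pairs contribute `0`). -/
noncomputable def treeCost {α : Type*} [Fintype α] (T : SimpleGraph α)
    (W : α → α → ℝ) (hW : ∀ x y, W x y = W y x) : ℝ :=
  ∑ p ∈ (Finset.univ : Finset α).sym2,
    Sym2.lift ⟨fun x y => W x y * (T.dist x y : ℝ),
      fun x y => by simp only []; rw [hW x y, T.dist_comm]⟩ p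

/-- A sum over ordered pairs counts each off-diagonal unordered pair twice and each diagonal
pair once. -/
lemma sum_sum_add_sum_diag_eq {α : Type*} (F : Sym2 α → ℝ) (s : Finset α) :
    ∑ x ∈ s, ∑ y ∈ s, F s(x, y) + ∑ x ∈ s, F s(x, x) = 2 * ∑ p ∈ s.sym2, F p := by
  induction s using Finset.cons_induction with
  | empty => simp
  | cons a s ha ih =>
    rw [Finset.sym2_cons, Finset.sum_disjUnion, mul_add, ← ih]
    have hcomm : ∑ x ∈ s, F s(x, a) = ∑ x ∈ s, F s(a, x) :=
      Finset.sum_congr rfl fun x _ => by rw [Sym2.eq_swap]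
    simp only [Finset.sum_cons, Finset.sum_add_distrib, Finset.sum_map, Sym2.mkEmbedding_apply,
      hcomm]
    ring

lemma sum_sum_eq_two_mul_treeCost {α : Type*} [Fintype α] (T : SimpleGraph α)
    (W : α → α → ℝ) (hW : ∀ x y, W x y = W y x) :
    ∑ x, ∑ y, W x y * (T.dist x y : ℝ) = 2 * treeCost T W hW := by
  unfold treeCost
  rw [← sum_sum_add_sum_diag_eq]
  simp

/-- Distances in a graph whose adjacency is pulled back along a permutation. -/
lemma dist_relabel {α : Type*} {T T' : SimpleGraph α} (σ : Equiv.Perm α)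
    (h : ∀ x y, T'.Adj x y ↔ T.Adj (σ x) (σ y)) (x y : α) :
    T'.dist x y = T.dist (σ x) (σ y) := by
  let e : T' ≃g T := ⟨σ, fun {a b} => (h a b).symm⟩
  have hset : (Set.range (Walk.length : T'.Walk x y → ℕ)) =
      Set.range (Walk.length : T.Walk (σ x) (σ y) → ℕ) := by
    ext n
    constructor
    · rintro ⟨p, rfl⟩
      exact ⟨p.map e.toHom, Walk.length_map _ _⟩
    · rintro ⟨p, rfl⟩
      refine ⟨(p.map e.symm.toHom).copy (e.symm_apply_apply x) (e.symm_apply_apply y), ?_⟩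
      exact (Walk.length_copy _ _ _).trans (Walk.length_map _ _)
  rw [dist_eq_sInf, dist_eq_sInf, hset]

/-- A geodesic from the nearer end of an edge does not use that edge. -/
lemma reachable_deleteEdges_of_dist {α : Type*} {T : SimpleGraph α} (hT : T.Connected)
    {u v x : α} (h : T.dist x v = T.dist x u + 1) :
    (T.deleteEdges {s(u, v)}).Reachable u x := by
  obtain ⟨p, hp⟩ := hT.exists_walk_length_eq_dist u x
  refine ⟨p.toDeleteEdge _ fun hmem => ?_⟩
  have hv : v ∈ p.support := p.snd_mem_support_of_mem_edges hmem
  -- the part of the geodesic after `v` would give `dist x v ≤ dist x u`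
  have h1 := dist_le (p.dropUntil v hv)
  have h2 := p.length_dropUntil_le_length hv
  rw [T.dist_comm] at h1
  rw [T.dist_comm] at hp
  omega

/-- After deletion of an edge of a tree, a vertex lies on the side of the nearer end. -/
lemma reachable_deleteEdges_iff {α : Type*} {T : SimpleGraph α} (hT : T.IsTree)
    {u v : α} (huv : T.Adj u v) (x : α) :
    (T.deleteEdges {s(u, v)}).Reachable u x ↔ T.dist x v = T.dist x u + 1 := by
  refine ⟨fun hu => ?_, reachable_deleteEdges_of_dist hT.connected⟩
  rcases hT.dist_eq_dist_add_one_of_adj x huv with h | h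
  · have hv := reachable_deleteEdges_of_dist hT.connected h
    rw [Sym2.eq_swap] at hv
    have hb : T.IsBridge s(u, v) := isAcyclic_iff_forall_isBridge.mp hT.isAcyclic huv
    exact absurd (hu.trans hv.symm) (isBridge_iff.mp hb)
  · exact h

/-- Let `T` be a finite tree on `S`, `{u, v}` an edge of `T`, and `U`,
`V'` the vertex sets of the components of `T − {u, v}` containing `u` and `v`.  Let `T'`
be the relabeling of `T` by the transposition `σ = (u v)`, i.e. `{x, y}` is an edge of
`T'` iff `{σ(x), σ(y)}` is an edge of `T` (the "edge switch").  Then for any symmetric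
nonnegative demand `W`,
`cost(T') − cost(T) = Σ_{i ∈ U, i ≠ u} (W(i,u) − W(i,v)) + Σ_{j ∈ V', j ≠ v} (W(j,v) − W(j,u))`;
in particular, all distances between pairs of vertices not involving `u` or `v` are
unchanged. -/
theorem edge_switch_cost {α : Type*} [Fintype α] (T T' : SimpleGraph α)
    (hT : T.IsTree) (u v : α) (huv : T.Adj u v)
    (hT' : ∀ x y : α, T'.Adj x y ↔ T.Adj (Equiv.swap u v x) (Equiv.swap u v y))
    (W : α → α → ℝ) (hWs : ∀ x y, W x y = W y x) (hW0 : ∀ x y, 0 ≤ W x y) :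
    treeCost T' W hWs - treeCost T W hWs =
      (∑ i ∈ Finset.univ.filter
          (fun i : α => (T.deleteEdges {s(u, v)}).Reachable u i ∧ i ≠ u),
        (W i u - W i v)) +
      (∑ j ∈ Finset.univ.filter
          (fun j : α => (T.deleteEdges {s(u, v)}).Reachable v j ∧ j ≠ v),
        (W j v - W j u)) ∧
    ∀ x y : α, x ≠ u → x ≠ v → y ≠ u → y ≠ v → T'.dist x y = T.dist x y := by
  have hne : u ≠ v := huv.ne
  have hd : ∀ x y, T'.dist x y = T.dist (Equiv.swap u v x) (Equiv.swap u v y) :=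
    dist_relabel _ hT'
  have hU := reachable_deleteEdges_iff hT huv
  have hV := reachable_deleteEdges_iff hT huv.symm
  rw [Sym2.eq_swap] at hV
  refine ⟨?_, fun x y hxu hxv hyu hyv => by
    rw [hd, Equiv.swap_apply_of_ne_of_ne hxu hxv, Equiv.swap_apply_of_ne_of_ne hyu hyv]⟩
  -- off `{u, v}`, `a x` is the change of the distance from `x` to `u` under the switch
  obtain ⟨a, ha⟩ : ∃ a : α → ℝ, ∀ x, a x =
      if x = u ∨ x = v then 0 else (T.dist x v : ℝ) - T.dist x u := ⟨_, fun _ => rfl⟩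
  have huv1 : T.dist u v = 1 := dist_eq_one_iff_adj.mpr huv
  have hvu1 : T.dist v u = 1 := dist_eq_one_iff_adj.mpr huv.symm
  have hδ : ∀ x y, (T'.dist x y : ℝ) - T.dist x y =
      a x * ((if y = u then 1 else 0) - (if y = v then 1 else 0)) +
      a y * ((if x = u then 1 else 0) - (if x = v then 1 else 0)) := by
    intro x y
    rw [hd, ha, ha]
    have c1 := T.dist_comm (u := u) (v := x)
    have c2 := T.dist_comm (u := v) (v := x)
    have c3 := T.dist_comm (u := u) (v := y)
    have c4 := T.dist_comm (u := v) (v := y)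
    by_cases hxu : x = u <;> by_cases hxv : x = v <;> by_cases hyu : y = u <;>
      by_cases hyv : y = v <;>
      simp_all [Equiv.swap_apply_of_ne_of_ne]
  have hind : ∀ x, a x =
      (if (T.deleteEdges {s(u, v)}).Reachable u x ∧ x ≠ u then 1 else 0) -
      (if (T.deleteEdges {s(u, v)}).Reachable v x ∧ x ≠ v then 1 else 0) := by
    intro x
    rw [ha]
    simp only [hU, hV]
    by_cases hxu : x = u
    · subst hxu
      simp [huv1]
    by_cases hxv : x = v
    · subst hxv
      simp [hvu1]
    rcases hT.dist_eq_dist_add_one_of_adj x huv with h | h <;> simp [h, hxu, hxv, add_assoc]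
  have hR : ∑ x, a x * (W x u - W x v) =
      (∑ i ∈ Finset.univ.filter
          (fun i : α => (T.deleteEdges {s(u, v)}).Reachable u i ∧ i ≠ u),
        (W i u - W i v)) +
      (∑ j ∈ Finset.univ.filter
          (fun j : α => (T.deleteEdges {s(u, v)}).Reachable v j ∧ j ≠ v),
        (W j v - W j u)) := by
    rw [Finset.sum_filter, Finset.sum_filter, ← Finset.sum_add_distrib]
    refine Finset.sum_congr rfl fun x _ => ?_
    rw [hind]
    split_ifs <;> ring
  rw [← hR]
  have hpair : ∑ x, ∑ y, W x y * (a x * ((if y = u then 1 else 0) - (if y = v then 1 else 0))) =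
      ∑ x, a x * (W x u - W x v) := by
    refine Finset.sum_congr rfl fun x _ => ?_
    simp only [mul_sub, Finset.sum_sub_distrib, mul_ite, mul_one, mul_zero, Finset.sum_ite_eq',
      Finset.mem_univ, if_true]
    ring
  have hpair' : ∑ x, ∑ y, W x y * (a y * ((if x = u then 1 else 0) - (if x = v then 1 else 0))) =
      ∑ x, a x * (W x u - W x v) := by
    rw [Finset.sum_comm, ← hpair]
    exact Finset.sum_congr rfl fun x _ => Finset.sum_congr rfl fun y _ => by rw [hWs]
  have h2 : 2 * treeCost T' W hWs - 2 * treeCost T W hWs = 2 * ∑ x, a x * (W x u - W x v) := by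
    rw [← sum_sum_eq_two_mul_treeCost, ← sum_sum_eq_two_mul_treeCost, two_mul]
    nth_rewrite 1 [← hpair]
    rw [← hpair']
    simp only [← Finset.sum_sub_distrib, ← Finset.sum_add_distrib, ← mul_sub, ← mul_add]
    exact Finset.sum_congr rfl fun x _ => Finset.sum_congr rfl fun y _ => by rw [hδ]
  linarith
end

section
/- Let T be a finite tree on vertex set S, {u, v} an edge of T, and U, V' the vertex sets of the components of T − {u, v} containing u and v. For u' ∈ U and v' ∈ V', let T'(u', v') be the tree obtained from T by removing edge {u, v} and adding edge {u', v'}. Then for any symmetric demand function W: S × S → ℝ≥0, cost(T'(u', v')) = A + F(u') + G(v'), where A = Σ_{{i,j} ⊆ U} W(i, j)·D_T(i, j) + Σ_{{i,j} ⊆ V'} W(i, j)·D_T(i, j) + Σ_{i ∈ U, j ∈ V'} W(i, j) is independent of the choice of u' and v', F(u') = Σ_{i ∈ U} D_T(i, u')·(Σ_{j ∈ V'} W(i, j)), and G(v') = Σ_{j ∈ V'} D_T(j, v')·(Σ_{i ∈ U} W(i, j)). Consequently, the choice of u' minimizing cost(T'(u', v')) and the choice of v' minimizing it can be made independently of each other.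 -/
/-!
Let `H = T − {u, v}`.  Since `{u, v}` is a bridge, `U` and `V'` are disjoint, and they cover the
vertex set because `T` is connected.  Both `T` and `T'(u', v')` arise from `H` by adding one edge
`{a, b}` joining the two components, and in such a graph the distance is `D_H(x, y)` inside a
component and `D_H(x, a) + 1 + D_H(b, y)` across
(`IsJoin.dist_same_side`, `IsJoin.dist_across`).  Hence `T` and
`T'(u', v')` have the same distances inside each component, while across them
`D_{T'}(i, j) = D_T(i, u') + 1 + D_T(j, v')`.  Splitting the sum over unordered pairs into those
inside `U`, those inside `V'`, and the crossing ones (`sum_sym2_split`) gives the formula.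
-/

open Finset SimpleGraph

open scoped Classical

/-- `G` is obtained from `H` by adding an edge between `a` and `b`, which lie in different
components of `H`. -/
structure IsJoin {α : Type*} (H G : SimpleGraph α) (a b : α) : Prop where
  adj_iff : ∀ x y, G.Adj x y ↔ H.Adj x y ∨ (x = a ∧ y = b) ∨ (x = b ∧ y = a)
  not_reachable : ¬ H.Reachable a b

theorem IsJoin.symm {α : Type*} {H G : SimpleGraph α} {a b : α} (h : IsJoin H G a b) :
    IsJoin H G b a :=
  ⟨fun x y => by rw [h.adj_iff]; tauto, fun h' => h.not_reachable h'.symm⟩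

theorem IsJoin.le {α : Type*} {H G : SimpleGraph α} {a b : α} (h : IsJoin H G a b) : H ≤ G :=
  fun x y hxy => (h.adj_iff x y).2 (Or.inl hxy)

/-- When `y` lies in the component of `a`, and `G` is `H` with the edge `{a, b}` added, this is the
distance from `x` to `y` in `G`, expressed through distances in `H`; for `x` outside the components
of `a` and `b` the value carries no meaning. -/
noncomputable def joinDist {α : Type*} (H : SimpleGraph α) (a b y x : α) : ℕ :=
  if H.Reachable a x then H.dist x y else H.dist x b + 1 + H.dist a y

/-- `joinDist` grows by at most one along each edge of `G`, so it bounds walk lengths below. -/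
theorem IsJoin.joinDist_le_length {α : Type*} {H G : SimpleGraph α} {a b : α}
    (h : IsJoin H G a b) {x y : α} (hy : H.Reachable a y) (p : G.Walk x y) :
    joinDist H a b y x ≤ p.length := by
  induction p with
  | nil => simp [joinDist, hy]
  | @cons x x' y hadj p ih =>
    refine le_trans ?_ (Nat.add_le_add_right (ih hy) 1)
    rcases (h.adj_iff x x').1 hadj with hH | ⟨rfl, rfl⟩ | ⟨rfl, rfl⟩
    · have hd : H.dist x x' = 1 := dist_eq_one_iff_adj.2 hH
      have hiff : H.Reachable a x ↔ H.Reachable a x' :=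
        ⟨fun q => q.trans hH.reachable, fun q => q.trans hH.symm.reachable⟩
      have h1 := hH.reachable.dist_triangle_left y
      have h2 := hH.reachable.dist_triangle_left b
      unfold joinDist
      split_ifs <;> first | omega | tauto
    · simp only [joinDist, Reachable.refl, if_true, h.not_reachable, if_false]
      omega
    · simp only [joinDist, Reachable.refl, if_true, h.not_reachable, if_false, dist_self]
      omega

theorem IsJoin.dist_same_side {α : Type*} {H G : SimpleGraph α} {a b : α}
    (h : IsJoin H G a b) {x y : α} (hx : H.Reachable a x) (hy : H.Reachable a y) :
    G.dist x y = H.dist x y := by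
  have hxy : H.Reachable x y := hx.symm.trans hy
  apply le_antisymm
  · obtain ⟨q, hq⟩ := hxy.exists_walk_length_eq_dist
    rw [← hq, ← Walk.length_mapLe h.le q]
    exact dist_le _
  · obtain ⟨p, hp⟩ := (hxy.mono h.le).exists_walk_length_eq_dist
    simpa [joinDist, hx, hp] using h.joinDist_le_length hy p

theorem IsJoin.dist_across {α : Type*} {H G : SimpleGraph α} {a b : α}
    (h : IsJoin H G a b) {x y : α} (hx : H.Reachable a x) (hy : H.Reachable b y) :
    G.dist x y = H.dist x a + 1 + H.dist y b := by
  have hnx : ¬ H.Reachable b x := fun q => h.not_reachable (hx.trans q.symm)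
  have hab : G.Adj a b := (h.adj_iff a b).2 (Or.inr (Or.inl ⟨rfl, rfl⟩))
  obtain ⟨q, hq⟩ := hx.symm.exists_walk_length_eq_dist
  obtain ⟨r, hr⟩ := hy.exists_walk_length_eq_dist
  let w : G.Walk x y := (q.mapLe h.le).append (Walk.cons hab (r.mapLe h.le))
  have hw : w.length = H.dist x a + 1 + H.dist b y := by
    simp only [w, Walk.length_append, Walk.length_cons, Walk.length_mapLe, hq, hr]
    omega
  rw [H.dist_comm (u := y)]
  apply le_antisymm
  · rw [← hw]
    exact dist_le w
  · obtain ⟨p, hp⟩ := w.reachable.exists_walk_length_eq_dist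
    simpa [joinDist, hnx, hp] using h.symm.joinDist_le_length hy p

theorem sum_sym2_split {α : Type*} [Fintype α] (U V : Finset α) (hd : Disjoint U V)
    (hc : ∀ x, x ∈ U ∨ x ∈ V) (f : Sym2 α → ℝ) :
    ∑ p ∈ (Finset.univ : Finset α).sym2, f p =
      ∑ p ∈ U.sym2, f p + ∑ p ∈ V.sym2, f p + ∑ i ∈ U, ∑ j ∈ V, f s(i, j) := by
  have hne : ∀ x, x ∈ U → x ∈ V → False := fun x h1 h2 => Finset.disjoint_left.1 hd h1 h2
  have hinj : Set.InjOn (fun q : α × α => s(q.1, q.2)) (U ×ˢ V : Finset (α × α)) := by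
    rintro ⟨i, j⟩ hij ⟨k, l⟩ hkl he
    simp only [Finset.coe_product, Set.mem_prod, Finset.mem_coe] at hij hkl
    rcases Sym2.eq_iff.1 he with ⟨h1, h2⟩ | ⟨h1, h2⟩
    · simp_all
    · have hil : i = l := h1
      exact (hne i hij.1 (hil ▸ hkl.2)).elim
  have hU : (Finset.univ : Finset α).sym2 =
      (U.sym2 ∪ V.sym2) ∪ (U ×ˢ V).image (fun q : α × α => s(q.1, q.2)) := by
    ext p
    induction p using Sym2.ind with
    | _ x y =>
      simp only [Finset.mk_mem_sym2_iff, Finset.mem_univ, Finset.mem_union, Finset.mem_image,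
        Finset.mem_product, Prod.exists, true_and, true_iff]
      rcases hc x with hx | hx <;> rcases hc y with hy | hy
      · exact Or.inl (Or.inl ⟨hx, hy⟩)
      · exact Or.inr ⟨x, y, ⟨hx, hy⟩, rfl⟩
      · exact Or.inr ⟨y, x, ⟨hy, hx⟩, Sym2.eq_swap⟩
      · exact Or.inl (Or.inr ⟨hx, hy⟩)
  have hUV : Disjoint U.sym2 V.sym2 := by
    rw [Finset.disjoint_left]
    intro p
    induction p using Sym2.ind with
    | _ x y =>
      simp only [Finset.mk_mem_sym2_iff]
      exact fun h1 h2 => hne x h1.1 h2.1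
  have hX : Disjoint (U.sym2 ∪ V.sym2) ((U ×ˢ V).image (fun q : α × α => s(q.1, q.2))) := by
    rw [Finset.disjoint_right]
    intro p hp
    obtain ⟨⟨i, j⟩, hij, rfl⟩ := Finset.mem_image.1 hp
    rw [Finset.mem_product] at hij
    simp only [Finset.mem_union, Finset.mk_mem_sym2_iff]
    rintro (h | h)
    · exact hne j h.2 hij.2
    · exact hne i hij.1 h.1
  rw [hU, Finset.sum_union hX, Finset.sum_union hUV, Finset.sum_image hinj, Finset.sum_product]

/-- Let `T` be a finite tree on `S`, `{u, v}` an edge of `T`, and `U`,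
`V'` the vertex sets of the components of `T − {u, v}` containing `u` and `v`.  For
`u' ∈ U`, `v' ∈ V'`, let `T'(u', v')` be the tree obtained by removing edge `{u, v}` and
adding edge `{u', v'}`.  Then for any symmetric nonnegative demand `W`,
`cost(T'(u', v')) = A + F(u') + G(v')`, where
`A = Σ_{{i,j} ⊆ U} W(i,j)·D_T(i,j) + Σ_{{i,j} ⊆ V'} W(i,j)·D_T(i,j) + Σ_{i ∈ U, j ∈ V'} W(i,j)`
does not depend on `u'`, `v'`, `F(u') = Σ_{i ∈ U} D_T(i,u')·(Σ_{j ∈ V'} W(i,j))` and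
`G(v') = Σ_{j ∈ V'} D_T(j,v')·(Σ_{i ∈ U} W(i,j))`; hence the minimizing choices of `u'`
and `v'` can be made independently. -/
theorem edge_replacement_cost {α : Type*} [Fintype α] (T : SimpleGraph α)
    (hT : T.IsTree) (u v : α) (huv : T.Adj u v)
    (W : α → α → ℝ) (hWs : ∀ x y, W x y = W y x) (hW0 : ∀ x y, 0 ≤ W x y) :
    ∀ UF VF : Finset α,
      UF = Finset.univ.filter (fun i : α => (T.deleteEdges {s(u, v)}).Reachable u i) →
      VF = Finset.univ.filter (fun j : α => (T.deleteEdges {s(u, v)}).Reachable v j) →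
      ∀ u' v' : α, u' ∈ UF → v' ∈ VF →
        treeCost (SimpleGraph.fromEdgeSet ((T.edgeSet \ {s(u, v)}) ∪ {s(u', v')})) W hWs =
          ((∑ p ∈ UF.sym2,
              Sym2.lift ⟨fun x y => W x y * (T.dist x y : ℝ),
                fun x y => by simp only []; rw [hWs x y, T.dist_comm]⟩ p) +
            (∑ p ∈ VF.sym2,
              Sym2.lift ⟨fun x y => W x y * (T.dist x y : ℝ),
                fun x y => by simp only []; rw [hWs x y, T.dist_comm]⟩ p) +
            ∑ i ∈ UF, ∑ j ∈ VF, W i j) +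
          (∑ i ∈ UF, (T.dist i u' : ℝ) * ∑ j ∈ VF, W i j) +
          (∑ j ∈ VF, (T.dist j v' : ℝ) * ∑ i ∈ UF, W i j) := by
  intro UF VF hUF hVF u' v' hu' hv'
  set H := T.deleteEdges {s(u, v)} with hH
  set T' := SimpleGraph.fromEdgeSet ((T.edgeSet \ {s(u, v)}) ∪ {s(u', v')}) with hT'
  have hU : ∀ i, i ∈ UF ↔ H.Reachable u i := fun i => by simp [hUF, hH]
  have hV : ∀ i, i ∈ VF ↔ H.Reachable v i := fun i => by simp [hVF, hH]
  have hru := (hU u').1 hu'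
  have hrv := (hV v').1 hv'
  have hnr : ¬ H.Reachable u v :=
    isBridge_iff.1 (isAcyclic_iff_forall_isBridge.1 hT.isAcyclic huv)
  have hnr' : ¬ H.Reachable u' v' := fun q => hnr ((hru.trans q).trans hrv.symm)
  have hJ : IsJoin H T u v := by
    refine ⟨fun x y => ?_, hnr⟩
    simp only [hH, deleteEdges_adj, Set.mem_singleton_iff, Sym2.eq_iff]
    constructor
    · tauto
    · rintro (h | ⟨rfl, rfl⟩ | ⟨rfl, rfl⟩)
      exacts [h.1, huv, huv.symm]
  have hJ' : IsJoin H T' u' v' := by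
    have hne : u' ≠ v' := fun h => hnr' (h ▸ Reachable.refl _)
    refine ⟨fun x y => ?_, hnr'⟩
    simp only [hH, hT', deleteEdges_adj, fromEdgeSet_adj, Set.mem_union, Set.mem_sdiff,
      mem_edgeSet, Set.mem_singleton_iff, Sym2.eq_iff]
    constructor
    · tauto
    · rintro (h | ⟨rfl, rfl⟩ | ⟨rfl, rfl⟩)
      · exact ⟨Or.inl h, h.1.ne⟩
      · exact ⟨Or.inr (Or.inl ⟨rfl, rfl⟩), hne⟩
      · exact ⟨Or.inr (Or.inr ⟨rfl, rfl⟩), hne.symm⟩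
  -- Every vertex reaches `u` in `T`, and a `T`-edge either stays in a component or is `{u, v}`.
  have hc : ∀ x, x ∈ UF ∨ x ∈ VF := by
    have key : ∀ x y, T.Walk x y → y = u → H.Reachable u x ∨ H.Reachable v x := by
      intro x y p
      induction p with
      | nil => rintro rfl; exact Or.inl (Reachable.refl _)
      | @cons x x' w hadj p ih =>
        intro hw
        rcases (hJ.adj_iff x x').1 hadj with h | ⟨rfl, rfl⟩ | ⟨rfl, rfl⟩
        · exact (ih hw).imp (·.trans h.symm.reachable) (·.trans h.symm.reachable)
        · exact Or.inl (Reachable.refl _)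
        · exact Or.inr (Reachable.refl _)
    intro x
    obtain ⟨p⟩ := hT.connected.preconnected x u
    exact (key x u p rfl).imp (hU x).2 (hV x).2
  have hd : Disjoint UF VF := by
    rw [Finset.disjoint_left]
    exact fun x h1 h2 => hnr (((hU x).1 h1).trans ((hV x).1 h2).symm)
  have hUU : ∀ x y, x ∈ UF → y ∈ UF → T'.dist x y = T.dist x y := fun x y hx hy => by
    rw [hU] at hx hy
    rw [hJ.dist_same_side hx hy,
      hJ'.dist_same_side (hru.symm.trans hx) (hru.symm.trans hy)]
  have hVV : ∀ x y, x ∈ VF → y ∈ VF → T'.dist x y = T.dist x y := fun x y hx hy => by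
    rw [hV] at hx hy
    rw [hJ.symm.dist_same_side hx hy,
      hJ'.symm.dist_same_side (hrv.symm.trans hx) (hrv.symm.trans hy)]
  have hUV : ∀ x y, x ∈ UF → y ∈ VF →
      T'.dist x y = T.dist x u' + 1 + T.dist y v' := fun x y hx hy => by
    rw [hU] at hx
    rw [hV] at hy
    rw [hJ.dist_same_side hx hru, hJ.symm.dist_same_side hy hrv,
      hJ'.dist_across (hru.symm.trans hx) (hrv.symm.trans hy)]
  rw [treeCost, sum_sym2_split UF VF hd hc]
  have e1 : ∀ S : Finset α, (∀ x y, x ∈ S → y ∈ S → T'.dist x y = T.dist x y) →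
      (∑ p ∈ S.sym2, Sym2.lift ⟨fun x y => W x y * (T'.dist x y : ℝ),
        fun x y => by simp only []; rw [hWs x y, T'.dist_comm]⟩ p) =
      ∑ p ∈ S.sym2, Sym2.lift ⟨fun x y => W x y * (T.dist x y : ℝ),
        fun x y => by simp only []; rw [hWs x y, T.dist_comm]⟩ p := by
    intro S hS
    refine Finset.sum_congr rfl fun p => ?_
    induction p using Sym2.ind with
    | _ x y =>
      intro hp
      rw [Finset.mk_mem_sym2_iff] at hp
      simp only [Sym2.lift_mk, hS x y hp.1 hp.2]
  have e2 : ∑ i ∈ UF, ∑ j ∈ VF, W i j * (T'.dist i j : ℝ) =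
      ∑ i ∈ UF, ∑ j ∈ VF, W i j + (∑ i ∈ UF, (T.dist i u' : ℝ) * ∑ j ∈ VF, W i j) +
        (∑ j ∈ VF, (T.dist j v' : ℝ) * ∑ i ∈ UF, W i j) := by
    simp only [Finset.mul_sum]
    rw [Finset.sum_comm (s := VF), ← Finset.sum_add_distrib, ← Finset.sum_add_distrib]
    refine Finset.sum_congr rfl fun i hi => ?_
    rw [← Finset.sum_add_distrib, ← Finset.sum_add_distrib]
    refine Finset.sum_congr rfl fun j hj => ?_
    rw [hUV i j hi hj]
    push_cast
    ring
  rw [e1 UF hUU, e1 VF hVV]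
  simp only [Sym2.lift_mk]
  rw [e2]
  ring
end
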